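/- arXiv:1507.08089 — 3 statements merged into one kernel-verified Lean document; each statement's English description precedes it below -/
import Mathlib

section
/- Let p ∈ P^log with 1 < p^- ≤ p^+ < ∞ and h ∈ ℝ^n. Then for all f ∈ L^{p(·)}(ℝ^n) ∩ S'(ℝ^n) with supp 𝓕f ⊂ {ξ : |ξ| ≤ 2^{v+1}}, v ∈ ℕ₀, the translation operator τ_h f := f(· + h) satisfies ‖τ_h f‖_{p(·)} ≤ c · exp((2 + 2^{vn}|h|) c_log(p)) ‖f‖_{p(·)}, where c > 0 is independent of h and v. -/
open MeasureTheory ENNReal SchwartzMap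

/-- The Luxemburg (quasi-)norm of the variable Lebesgue space `L^{p(·)}`. -/
noncomputable def luxNorm {n : ℕ} (p : EuclideanSpace ℝ (Fin n) → ℝ)
    (f : EuclideanSpace ℝ (Fin n) → ℂ) : ℝ≥0∞ :=
  sInf {μ : ℝ≥0∞ | 0 < μ ∧ ∫⁻ x, ((‖f x‖₊ : ℝ≥0∞) / μ) ^ p x ≤ 1}

section Bandlimited

open FourierTransform Convolution

variable {V : Type*} [NormedAddCommGroup V] [InnerProductSpace ℝ V] [FiniteDimensional ℝ V]
  [MeasurableSpace V] [BorelSpace V]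

theorem lintegral_enorm_mul_le_of_modular_le_one {p : V → ℝ} (hp : ∀ x, 1 ≤ p x) {F : V → ℂ}
    (hF : ∫⁻ x, ‖F x‖ₑ ^ p x ≤ 1) {G : V → ℝ≥0∞} (hG : Measurable G) {M : ℝ≥0∞} (hM : M ≠ ⊤)
    (hGM : ∀ x, G x ≤ M) : ∫⁻ x, ‖F x‖ₑ * G x ≤ (∫⁻ x, G x) + M := by
  calc ∫⁻ x, ‖F x‖ₑ * G x ≤ ∫⁻ x, (G x + M * ‖F x‖ₑ ^ p x) := by
        refine lintegral_mono fun x => ?_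
        rcases le_total ‖F x‖ₑ 1 with h | h
        · exact (mul_le_of_le_one_left (zero_le) h).trans le_self_add
        · refine le_trans ?_ le_add_self
          rw [mul_comm]
          refine mul_le_mul' (hGM x) ?_
          simpa using ENNReal.rpow_le_rpow_of_exponent_le h (hp x)
    _ = (∫⁻ x, G x) + M * ∫⁻ x, ‖F x‖ₑ ^ p x := by
        rw [lintegral_add_left hG, lintegral_const_mul' _ _ hM]
    _ ≤ (∫⁻ x, G x) + M := by
        gcongr
        exact mul_le_of_le_one_right (zero_le) hF

theorem enorm_convolution_le_mul_lintegral {k g : V → ℂ} {M : ℝ≥0∞} (hM : M ≠ ⊤)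
    (hk : ∀ x, ‖k x‖ₑ ≤ M) (x : V) :
    ‖(k ⋆[ContinuousLinearMap.mul ℂ ℂ] g) x‖ₑ ≤ M * ∫⁻ t, ‖g t‖ₑ := by
  rw [convolution_def]
  calc _ ≤ ∫⁻ t, ‖k t * g (x - t)‖ₑ := enorm_integral_le_lintegral_enorm _
    _ ≤ ∫⁻ t, M * ‖g (x - t)‖ₑ := by
        refine lintegral_mono fun t => ?_
        rw [enorm_mul]
        gcongr
        exact hk t
    _ = M * ∫⁻ t, ‖g t‖ₑ := by
        rw [lintegral_const_mul' _ _ hM, lintegral_sub_left_eq_self (fun t => ‖g t‖ₑ) x]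

theorem lintegral_enorm_convolution_le {k g : V → ℂ} (hk : Continuous k) (hg : Continuous g) :
    ∫⁻ x, ‖(k ⋆[ContinuousLinearMap.mul ℂ ℂ] g) x‖ₑ ≤ (∫⁻ t, ‖k t‖ₑ) * ∫⁻ t, ‖g t‖ₑ := by
  calc ∫⁻ x, ‖(k ⋆[ContinuousLinearMap.mul ℂ ℂ] g) x‖ₑ
      ≤ ∫⁻ x, ∫⁻ t, ‖k t‖ₑ * ‖g (x - t)‖ₑ := by
        refine lintegral_mono fun x => ?_
        rw [convolution_def]
        refine (enorm_integral_le_lintegral_enorm _).trans_eq ?_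
        simp [enorm_mul]
    _ = ∫⁻ t, ∫⁻ x, ‖k t‖ₑ * ‖g (x - t)‖ₑ := by
        refine lintegral_lintegral_swap (Continuous.aemeasurable ?_)
        simp only [Function.uncurry_def, ← enorm_mul]
        fun_prop
    _ = ∫⁻ t, ‖k t‖ₑ * ∫⁻ x, ‖g x‖ₑ := by
        refine lintegral_congr fun t => ?_
        rw [lintegral_const_mul _ (Continuous.measurable (by fun_prop)), lintegral_sub_right_eq_self (fun x => ‖g x‖ₑ) t]
    _ = _ := lintegral_mul_const _ (by fun_prop)

theorem exists_schwartz_fourier_eq_one :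
    ∃ k : 𝓢(V, ℂ), ∀ ξ : V, ‖ξ‖ ≤ 3 / 2 → 𝓕 k ξ = 1 := by
  let b : ContDiffBump (0 : V) := ⟨3 / 2, 2, by norm_num, by norm_num⟩
  have hc : HasCompactSupport fun x => (b x : ℂ) :=
    b.hasCompactSupport.comp_left Complex.ofReal_zero
  have hd : ContDiff ℝ (⊤ : ℕ∞) fun x => (b x : ℂ) :=
    Complex.ofRealCLM.contDiff.comp b.contDiff
  refine ⟨𝓕⁻ (hc.toSchwartzMap hd), fun ξ hξ => ?_⟩
  rw [FourierTransform.fourier_fourierInv_eq]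
  simpa using b.one_of_mem_closedBall (by simpa using hξ)

theorem exists_dilated_kernel : ∃ A : ℝ, 0 < A ∧ ∀ R : ℝ, 1 ≤ R → ∃ k : 𝓢(V, ℂ),
    (∀ x, ‖k x‖ ≤ A * R ^ Module.finrank ℝ V) ∧ ∫⁻ x, ‖k x‖ₑ ≤ ENNReal.ofReal A ∧
    ∀ ξ : V, ‖ξ‖ ≤ 3 / 2 * R → 𝓕 k ξ = 1 := by
  obtain ⟨k, hk⟩ := exists_schwartz_fourier_eq_one (V := V)
  obtain ⟨C, hC⟩ := k.decay 0 0
  have hC' : ∀ x, ‖k x‖ ≤ C := by simpa using hC.2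
  refine ⟨C + ∫ x, ‖k x‖, add_pos_of_pos_of_nonneg hC.1 (integral_nonneg fun _ => norm_nonneg _),
    fun R hR => ?_⟩
  have hR0 : 0 < R := by linarith
  set d := Module.finrank ℝ V
  let e : V ≃L[ℝ] V := ContinuousLinearEquiv.smulLeft (Units.mk0 R hR0.ne')
  have hI : 0 ≤ ∫ x, ‖k x‖ := integral_nonneg fun _ => norm_nonneg _
  let kR : 𝓢(V, ℂ) := ((R ^ d : ℝ) : ℂ) • compCLMOfContinuousLinearEquiv ℂ e k
  have hkR : ∀ x, kR x = ((R ^ d : ℝ) : ℂ) * k (R • x) := fun x => rfl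
  have hn : ∀ x, ‖kR x‖ = R ^ d * ‖k (R • x)‖ := fun x => by
    rw [hkR, norm_mul, Complex.norm_real, Real.norm_of_nonneg (by positivity)]
  refine ⟨kR, fun x => ?_, ?_, fun ξ hξ => ?_⟩
  · rw [hn, mul_comm]
    gcongr
    exact (hC' _).trans (by linarith)
  · rw [← ofReal_integral_norm_eq_lintegral_enorm kR.integrable]
    refine ENNReal.ofReal_le_ofReal ?_
    simp only [hn]
    rw [integral_const_mul, Measure.integral_comp_smul_of_nonneg _ (fun x => ‖k x‖) R (hR := hR0.le),
      smul_eq_mul, ← mul_assoc, mul_inv_cancel₀ (by positivity), one_mul]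
    linarith [hC.1]
  · rw [← hk (R⁻¹ • ξ), fourier_coe, fourier_coe, Real.fourier_eq, Real.fourier_eq]
    · have := Measure.integral_comp_smul_of_nonneg (volume : Measure V)
        (fun x => Real.fourierChar (-inner ℝ x (R⁻¹ • ξ)) • k x) R (hR := hR0.le)
      have h2 : ∀ x, Real.fourierChar (-inner ℝ x ξ) • kR x = ((R ^ d : ℝ) : ℂ) *
          (Real.fourierChar (-inner ℝ (R • x) (R⁻¹ • ξ)) • k (R • x)) := fun x => by
        rw [hkR, inner_smul_left, inner_smul_right, ← mul_assoc]
        simp [hR0.ne', Circle.smul_def]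
        ring
      simp only [h2]
      rw [integral_const_mul, this, Complex.real_smul, ← mul_assoc, ← Complex.ofReal_mul,
        mul_inv_cancel₀ (by positivity), Complex.ofReal_one, one_mul]
    · rw [norm_smul, norm_inv, Real.norm_of_nonneg hR0.le, inv_mul_le_iff₀ hR0]
      linarith

theorem integrable_mul_schwartz_of_modular_le_one {p : V → ℝ} (hp : ∀ x, 1 ≤ p x) {F : V → ℂ}
    (hFm : Measurable F) (hF : ∫⁻ x, ‖F x‖ₑ ^ p x ≤ 1) (g : 𝓢(V, ℂ)) :
    Integrable fun x => F x * g x := by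
  obtain ⟨C, -, hC⟩ := g.decay 0 0
  have hC' : ∀ x, ‖g x‖ₑ ≤ ENNReal.ofReal C := fun x => by
    rw [← ofReal_norm]
    exact ENNReal.ofReal_le_ofReal (by simpa using hC x)
  refine ⟨(hFm.mul g.continuous.measurable).aestronglyMeasurable, ?_⟩
  simp only [HasFiniteIntegral, enorm_mul]
  refine (lintegral_enorm_mul_le_of_modular_le_one hp hF g.continuous.enorm.measurable
    ENNReal.ofReal_ne_top hC').trans_lt ?_
  exact ENNReal.add_lt_top.2 ⟨g.integrable.2, ENNReal.ofReal_lt_top⟩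

theorem locallyIntegrable_of_modular_le_one {p : V → ℝ} (hp : ∀ x, 1 ≤ p x) {F : V → ℂ}
    (hFm : Measurable F) (hF : ∫⁻ x, ‖F x‖ₑ ^ p x ≤ 1) : LocallyIntegrable F := by
  refine locallyIntegrable_iff.2 fun s hs => ⟨hFm.aestronglyMeasurable, ?_⟩
  have hsm := hs.measurableSet
  have h := lintegral_enorm_mul_le_of_modular_le_one hp hF
    (G := s.indicator fun _ => 1) (measurable_const.indicator hsm) ENNReal.one_ne_top
    (fun x => Set.indicator_le_self' (fun _ _ => zero_le) x)
  rw [HasFiniteIntegral, ← lintegral_indicator hsm]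
  refine (lintegral_mono fun x => ?_).trans_lt (h.trans_lt ?_)
  · by_cases hx : x ∈ s <;> simp [hx]
  · rw [lintegral_indicator_const hsm, one_mul]
    exact ENNReal.add_lt_top.2 ⟨hs.measure_lt_top, ENNReal.one_lt_top⟩

theorem integral_mul_eq_integral_mul_convolution {p : V → ℝ} (hp : ∀ x, 1 ≤ p x) {F : V → ℂ}
    (hFm : Measurable F) (hF : ∫⁻ x, ‖F x‖ₑ ^ p x ≤ 1) {R : ℝ} (hR : 0 < R)
    (hband : ∀ φ : 𝓢(V, ℂ), (∀ ξ ∈ tsupport ⇑φ, R < ‖ξ‖) → ∫ x, F x * 𝓕 φ x = 0)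
    {k : 𝓢(V, ℂ)} (hk : ∀ ξ : V, ‖ξ‖ ≤ 3 / 2 * R → 𝓕 k ξ = 1) (g : 𝓢(V, ℂ)) :
    ∫ x, F x * g x = ∫ x, F x * SchwartzMap.convolution (.mul ℂ ℂ) k g x := by
  set G := SchwartzMap.convolution (.mul ℂ ℂ) k g
  have hzero : ∀ ξ : V, ‖ξ‖ < 3 / 2 * R → 𝓕⁻ (g - G) ξ = 0 := fun ξ hξ => by
    have h1 : 𝓕⁻ (g - G) ξ = 𝓕 (g - G) (-ξ) := rfl
    rw [h1, ← FourierTransform.fourierCLM_apply (R := ℂ), map_sub,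
      FourierTransform.fourierCLM_apply, FourierTransform.fourierCLM_apply,
      SchwartzMap.fourier_convolution]
    simp [hk (-ξ) (by simpa using hξ.le)]
  have hsupp : ∀ ξ ∈ tsupport ⇑(𝓕⁻ (g - G) : 𝓢(V, ℂ)), R < ‖ξ‖ := fun ξ hξ => by
    by_contra! hle
    refine (notMem_tsupport_iff_eventuallyEq.2 ?_) hξ
    filter_upwards [(isOpen_lt continuous_norm continuous_const).mem_nhds
      (show ‖ξ‖ < 3 / 2 * R by linarith)] with y hy using hzero y hy
  have h := hband _ hsupp
  rw [FourierTransform.fourier_fourierInv_eq] at h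
  simp only [sub_apply, mul_sub] at h
  rw [integral_sub (integrable_mul_schwartz_of_modular_le_one hp hFm hF _)
    (integrable_mul_schwartz_of_modular_le_one hp hFm hF _)] at h
  exact sub_eq_zero.1 h

theorem enorm_integral_mul_le_of_bandlimited {p : V → ℝ} (hp : ∀ x, 1 ≤ p x) {F : V → ℂ}
    (hFm : Measurable F) (hF : ∫⁻ x, ‖F x‖ₑ ^ p x ≤ 1) {R : ℝ} (hR : 0 < R)
    (hband : ∀ φ : 𝓢(V, ℂ), (∀ ξ ∈ tsupport ⇑φ, R < ‖ξ‖) → ∫ x, F x * 𝓕 φ x = 0)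
    {k : 𝓢(V, ℂ)} (hk : ∀ ξ : V, ‖ξ‖ ≤ 3 / 2 * R → 𝓕 k ξ = 1) {M : ℝ≥0∞} (hM : M ≠ ⊤)
    (hkM : ∀ x, ‖k x‖ₑ ≤ M) {g : 𝓢(V, ℂ)} (hg : ∫⁻ x, ‖g x‖ₑ ≤ 1) :
    ‖∫ x, F x * g x‖ₑ ≤ (∫⁻ x, ‖k x‖ₑ) + M := by
  rw [integral_mul_eq_integral_mul_convolution hp hFm hF hR hband hk]
  refine (enorm_integral_le_lintegral_enorm _).trans ?_
  simp only [enorm_mul]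
  refine (lintegral_enorm_mul_le_of_modular_le_one hp hF
    (SchwartzMap.continuous _).enorm.measurable hM fun x => ?_).trans ?_
  · rw [SchwartzMap.convolution_apply]
    exact (enorm_convolution_le_mul_lintegral hM hkM x).trans (mul_le_of_le_one_right zero_le hg)
  · simp only [SchwartzMap.convolution_apply]
    refine add_le_add_left ?_ _
    exact (lintegral_enorm_convolution_le k.continuous g.continuous).trans
      (mul_le_of_le_one_right zero_le hg)

theorem ae_enorm_le_of_enorm_integral_mul_le {F : V → ℂ} (hF : LocallyIntegrable F) {K : ℝ≥0∞}
    (h : ∀ g : 𝓢(V, ℂ), ∫⁻ x, ‖g x‖ₑ ≤ 1 → ‖∫ x, F x * g x‖ₑ ≤ K) :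
    ∀ᵐ x, ‖F x‖ₑ ≤ K := by
  let b : ℕ → ContDiffBump (0 : V) := fun i =>
    ⟨1 / (i + 1 : ℝ), 2 * (1 / (i + 1 : ℝ)), by positivity, by
      have : 0 < 1 / (i + 1 : ℝ) := by positivity
      linarith⟩
  have hb : Filter.Tendsto (fun i => (b i).rOut) Filter.atTop (nhds 0) := by
    simpa [b] using tendsto_one_div_add_atTop_nhds_zero_nat.const_mul (2 : ℝ)
  filter_upwards [ContDiffBump.ae_convolution_tendsto_right_of_locallyIntegrable
    (φ := b) (K := 2) hb (Filter.Eventually.of_forall fun i => le_rfl) hF] with x hx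
  refine le_of_tendsto hx.enorm (Filter.Eventually.of_forall fun i => ?_)
  have hc : HasCompactSupport fun y => (((b i).normed volume (x - y) : ℝ) : ℂ) := by
    refine HasCompactSupport.comp_left (g := Complex.ofReal) ?_ Complex.ofReal_zero
    exact (b i).hasCompactSupport_normed.comp_homeomorph (Homeomorph.subLeft x)
  have hd : ContDiff ℝ (⊤ : ℕ∞) fun y => (((b i).normed volume (x - y) : ℝ) : ℂ) :=
    Complex.ofRealCLM.contDiff.comp
      ((b i).contDiff_normed.comp (contDiff_const.sub contDiff_id))
  have hint : ∫⁻ y, ‖hc.toSchwartzMap hd y‖ₑ ≤ 1 := by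
    simp only [HasCompactSupport.toSchwartzMap_toFun]
    rw [lintegral_sub_left_eq_self (fun y => ‖(((b i).normed volume y : ℝ) : ℂ)‖ₑ) x,
      ← ofReal_integral_norm_eq_lintegral_enorm (b i).integrable_normed.ofReal]
    simp [abs_of_nonneg ((b i).nonneg_normed _), (b i).integral_normed]
  refine le_of_eq_of_le (congrArg _ ?_) (h _ hint)
  rw [convolution_eq_swap]
  refine integral_congr_ae (Filter.Eventually.of_forall fun y => ?_)
  simp [mul_comm]

theorem exists_ae_norm_le_of_bandlimited : ∃ K : ℝ, 1 ≤ K ∧ ∀ p : V → ℝ, (∀ x, 1 ≤ p x) →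
    ∀ R : ℝ, 1 ≤ R → ∀ F : V → ℂ, Measurable F → ∫⁻ x, ‖F x‖ₑ ^ p x ≤ 1 →
    (∀ φ : 𝓢(V, ℂ), (∀ ξ ∈ tsupport ⇑φ, R < ‖ξ‖) → ∫ x, F x * 𝓕 φ x = 0) →
    ∀ᵐ x, ‖F x‖ ≤ K * R ^ Module.finrank ℝ V := by
  obtain ⟨A, hA, h⟩ := exists_dilated_kernel (V := V)
  refine ⟨2 * A + 1, by linarith, fun p hp R hR F hFm hF hband => ?_⟩
  obtain ⟨k, hk1, hk2, hk3⟩ := h R hR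
  have hk1' : ∀ x, ‖k x‖ₑ ≤ ENNReal.ofReal (A * R ^ Module.finrank ℝ V) := fun x => by
    rw [← ofReal_norm]
    exact ENNReal.ofReal_le_ofReal (hk1 x)
  filter_upwards [ae_enorm_le_of_enorm_integral_mul_le
    (locallyIntegrable_of_modular_le_one hp hFm hF) fun g hg =>
      enorm_integral_mul_le_of_bandlimited hp hFm hF (by linarith) hband hk3
        ENNReal.ofReal_ne_top hk1' hg] with x hx
  have hRd : 1 ≤ R ^ Module.finrank ℝ V := one_le_pow₀ hR
  have h2 : ‖F x‖ₑ ≤ ENNReal.ofReal (A + A * R ^ Module.finrank ℝ V) := by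
    rw [ENNReal.ofReal_add hA.le (by positivity)]
    exact hx.trans (by gcongr)
  rw [← ofReal_norm, ENNReal.ofReal_le_ofReal_iff (by positivity)] at h2
  nlinarith

end Bandlimited

section VariableExponent

variable {V : Type*} [NormedAddCommGroup V]

theorem log_mul_le_of_le_div_log {a pp δ r R : ℝ} (hδ0 : 0 ≤ δ) (hδ : δ ≤ pp) (hr : 0 < r)
    (hR : 1 ≤ R) (hlog : δ ≤ a / Real.log (Real.exp 1 + 1 / r)) :
    Real.log R * δ ≤ a + pp * Real.log (1 + R * r) := by
  have he : 1 < Real.exp 1 := Real.one_lt_exp_iff.2 one_pos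
  have hpos : 0 < Real.log (Real.exp 1 + 1 / r) :=
    Real.log_pos (by have : 0 < 1 / r := by positivity
                     linarith)
  have hRle : R ≤ (Real.exp 1 + 1 / r) * (1 + R * r) := by
    have h1 : (1 / r) * (R * r) = R := by field_simp
    have h2 : 0 ≤ Real.exp 1 * (1 + R * r) + 1 / r := by positivity
    nlinarith
  have hle : Real.log R ≤ Real.log (Real.exp 1 + 1 / r) + Real.log (1 + R * r) := by
    rw [← Real.log_mul (by positivity) (by positivity)]
    exact Real.log_le_log (by linarith) hRle
  have hs : 0 ≤ Real.log (1 + R * r) := Real.log_nonneg (by nlinarith)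
  calc Real.log R * δ
      ≤ (Real.log (Real.exp 1 + 1 / r) + Real.log (1 + R * r)) * δ := by gcongr
    _ = δ * Real.log (Real.exp 1 + 1 / r) + δ * Real.log (1 + R * r) := by ring
    _ ≤ a + pp * Real.log (1 + R * r) := by
        gcongr
        exact (le_div_iff₀ hpos).1 hlog

theorem log_mul_le_of_le_div_log_add {b δ : ℝ} (hb : 0 ≤ b) {x y : V}
    (hdecay : δ ≤ b / Real.log (Real.exp 1 + ‖x‖) + b / Real.log (Real.exp 1 + ‖y‖)) :
    Real.log (Real.exp 1 + ‖y‖) * δ ≤ b * (2 + Real.log (1 + ‖x - y‖)) := by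
  have he : 1 < Real.exp 1 := Real.one_lt_exp_iff.2 one_pos
  have hl : ∀ z : V, 1 ≤ Real.log (Real.exp 1 + ‖z‖) := fun z => by
    rw [Real.le_log_iff_exp_le (by positivity)]
    linarith [norm_nonneg z]
  have hs : 0 ≤ Real.log (1 + ‖x - y‖) := Real.log_nonneg (by linarith [norm_nonneg (x - y)])
  have hle : Real.log (Real.exp 1 + ‖y‖)
      ≤ Real.log (Real.exp 1 + ‖x‖) + Real.log (1 + ‖x - y‖) := by
    rw [← Real.log_mul (by positivity) (by positivity)]
    refine Real.log_le_log (by positivity) ?_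
    have h1 : ‖y‖ ≤ ‖x‖ + ‖x - y‖ := by
      have := norm_sub_norm_le y x
      rw [norm_sub_rev] at this
      linarith
    nlinarith [norm_nonneg x, norm_nonneg (x - y), mul_nonneg (norm_nonneg x) (norm_nonneg (x - y))]
  set X := Real.log (Real.exp 1 + ‖x‖)
  set Y := Real.log (Real.exp 1 + ‖y‖)
  set S := Real.log (1 + ‖x - y‖)
  have hX : 1 ≤ X := hl x
  have hY : 1 ≤ Y := hl y
  have hYX : Y / X ≤ 1 + S := by
    rw [div_le_iff₀ (by linarith)]
    nlinarith
  calc Y * δ ≤ Y * (b / X + b / Y) := by gcongr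
    _ = b * (Y / X + 1) := by
        field_simp
    _ ≤ b * (2 + S) := mul_le_mul_of_nonneg_left (by linarith) hb

theorem exists_rpow_le_mul_rpow_add {p : V → ℝ} {a b pp : ℝ} (hb : 0 ≤ b) (ha : 0 ≤ a)
    (hp1 : ∀ x, 1 ≤ p x) (hpp : ∀ x, p x ≤ pp)
    (hlog : ∀ x y, |p x - p y| ≤ a / Real.log (Real.exp 1 + 1 / ‖x - y‖))
    (hdecay : ∀ x y, |p x - p y| ≤
      b / Real.log (Real.exp 1 + ‖x‖) + b / Real.log (Real.exp 1 + ‖y‖))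
    {K : ℝ} (hK : 1 ≤ K) (d : ℕ) {m : ℝ} (hm : 0 ≤ m) :
    ∃ C N : ℝ, 1 ≤ C ∧ 0 ≤ N ∧ ∀ R : ℝ, 1 ≤ R → ∀ x y : V, ∀ t : ℝ, 0 ≤ t → t ≤ K * R ^ d →
      t ^ p x ≤ C * (1 + R * ‖x - y‖) ^ N * (t ^ p y + (1 + ‖y‖) ^ (-m)) := by
  have hpp0 : 0 ≤ pp := by linarith [hp1 0, hpp 0]
  have hlogK := Real.log_nonneg hK
  refine ⟨Real.exp (pp * Real.log K + d * a + 2 * m * b), d * pp + m * b,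
    Real.one_le_exp (by positivity), by positivity, fun R hR x y t ht0 ht => ?_⟩
  set s := R * ‖x - y‖
  have hs0 : 0 ≤ s := by positivity
  have hxys : ‖x - y‖ ≤ s := le_mul_of_one_le_left (norm_nonneg _) hR
  have hS : 0 ≤ Real.log (1 + s) := Real.log_nonneg (by linarith)
  set D := pp * Real.log K + d * a + 2 * m * b
  set N := d * pp + m * b
  have hC : 1 ≤ Real.exp D * (1 + s) ^ N :=
    one_le_mul_of_one_le_of_one_le (Real.one_le_exp (by positivity))
      (Real.one_le_rpow (by linarith) (by positivity))
  have hy0 : 0 < (1 + ‖y‖) ^ (-m) := by positivity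
  have hδ0 := abs_nonneg (p x - p y)
  have hδpp : |p x - p y| ≤ pp := abs_le.2
    ⟨by linarith [hp1 x, hpp y], by linarith [hp1 y, hpp x]⟩
  by_cases hsmall : t < (1 + ‖y‖) ^ (-m)
  · have hone : (1 + ‖y‖) ^ (-m) ≤ 1 :=
      Real.rpow_le_one_of_one_le_of_nonpos (by linarith [norm_nonneg y]) (by linarith)
    calc t ^ p x ≤ t := by
          rcases ht0.eq_or_lt with h0 | h0
          · rw [← h0, Real.zero_rpow (by linarith [hp1 x])]
          · simpa using Real.rpow_le_rpow_of_exponent_ge h0 (by linarith) (hp1 x)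
      _ ≤ 1 * (t ^ p y + (1 + ‖y‖) ^ (-m)) := by
          linarith [Real.rpow_nonneg ht0 (p y)]
      _ ≤ _ := by gcongr
  · push Not at hsmall
    have htpos : 0 < t := hy0.trans_le hsmall
    have hkey : Real.log t * (p x - p y) ≤ D + N * Real.log (1 + s) := by
      rcases le_total 1 t with h1 | h1
      · rcases eq_or_ne x y with rfl | hxy
        · simp only [sub_self, mul_zero]
          positivity
        have h2 := log_mul_le_of_le_div_log hδ0 hδpp (norm_pos_iff.2 (sub_ne_zero.2 hxy)) hR
          (hlog x y)
        have h3 : Real.log t ≤ Real.log K + d * Real.log R := by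
          rw [← Real.log_pow, ← Real.log_mul (by positivity) (by positivity)]
          exact Real.log_le_log htpos ht
        calc Real.log t * (p x - p y) ≤ Real.log t * |p x - p y| :=
              mul_le_mul_of_nonneg_left (le_abs_self _) (Real.log_nonneg h1)
          _ ≤ (Real.log K + d * Real.log R) * |p x - p y| := by gcongr
          _ = Real.log K * |p x - p y| + d * (Real.log R * |p x - p y|) := by ring
          _ ≤ Real.log K * pp + d * (a + pp * Real.log (1 + s)) := by gcongr
          _ ≤ D + N * Real.log (1 + s) := by
              have : 0 ≤ m * b * Real.log (1 + s) := by positivity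
              have : 0 ≤ m * b := by positivity
              simp only [D, N]
              linarith
      · have h2 := log_mul_le_of_le_div_log_add hb (hdecay x y)
        have h3 : -Real.log t ≤ m * Real.log (Real.exp 1 + ‖y‖) := by
          have h4 := Real.log_le_log hy0 hsmall
          rw [Real.log_rpow (by positivity)] at h4
          have h5 : Real.log (1 + ‖y‖) ≤ Real.log (Real.exp 1 + ‖y‖) :=
            Real.log_le_log (by positivity) (by linarith [Real.one_le_exp (zero_le_one' ℝ)])
          nlinarith
        calc Real.log t * (p x - p y) = -Real.log t * (p y - p x) := by ring
          _ ≤ -Real.log t * |p x - p y| := by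
              refine mul_le_mul_of_nonneg_left ?_ (neg_nonneg.2 (Real.log_nonpos ht0 h1))
              rw [abs_sub_comm]
              exact le_abs_self _
          _ ≤ m * Real.log (Real.exp 1 + ‖y‖) * |p x - p y| := by gcongr
          _ = m * (Real.log (Real.exp 1 + ‖y‖) * |p x - p y|) := by ring
          _ ≤ m * (b * (2 + Real.log (1 + s))) := by
              refine mul_le_mul_of_nonneg_left (h2.trans ?_) hm
              gcongr
          _ ≤ D + N * Real.log (1 + s) := by
              have : 0 ≤ d * pp * Real.log (1 + s) := by positivity
              have : 0 ≤ pp * Real.log K + d * a := by positivity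
              simp only [D, N]
              linarith
    calc t ^ p x = t ^ (p x - p y) * t ^ p y := by
          rw [← Real.rpow_add htpos, sub_add_cancel]
      _ ≤ (Real.exp D * (1 + s) ^ N) * t ^ p y := by
          gcongr
          rw [Real.rpow_def_of_pos htpos, Real.rpow_def_of_pos (by linarith), ← Real.exp_add,
            mul_comm (Real.log (1 + s))]
          exact Real.exp_le_exp.2 hkey
      _ ≤ _ := by
          gcongr
          linarith

theorem abs_sub_le_of_abs_one_div_sub_le {p : V → ℝ} {c pp q : ℝ} (hp1 : ∀ x, 1 ≤ p x)
    (hpp : ∀ x, p x ≤ pp)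
    (hdecay : ∀ x, |1 / p x - q| ≤ c / Real.log (Real.exp 1 + ‖x‖)) (x y : V) :
    |p x - p y| ≤ pp ^ 2 * c / Real.log (Real.exp 1 + ‖x‖) +
      pp ^ 2 * c / Real.log (Real.exp 1 + ‖y‖) := by
  have hx : 0 < p x := by linarith [hp1 x]
  have hy : 0 < p y := by linarith [hp1 y]
  have h1 : |1 / p x - 1 / p y| ≤
      c / Real.log (Real.exp 1 + ‖x‖) + c / Real.log (Real.exp 1 + ‖y‖) := by
    have h2 := hdecay y
    rw [abs_sub_comm] at h2
    exact (abs_sub_le _ q _).trans (add_le_add (hdecay x) h2)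
  have h3 : |p x - p y| = p x * p y * |1 / p x - 1 / p y| := by
    rw [← abs_of_pos (mul_pos hx hy), ← abs_mul, abs_sub_comm]
    congr 1
    field_simp
  calc |p x - p y| = p x * p y * |1 / p x - 1 / p y| := h3
    _ ≤ pp ^ 2 * (c / Real.log (Real.exp 1 + ‖x‖) + c / Real.log (Real.exp 1 + ‖y‖)) := by
        refine mul_le_mul ?_ h1 (abs_nonneg _) (sq_nonneg _)
        rw [sq]
        exact mul_le_mul (hpp x) (hpp y) hy.le (hx.le.trans (hpp x))
    _ = _ := by ring

theorem exists_one_add_rpow_le_exp {ε N : ℝ} (hε : 0 < ε) (hN : 0 ≤ N) :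
    ∃ C : ℝ, ∀ w : ℝ, 0 ≤ w → (1 + 2 * w) ^ N ≤ Real.exp (C + w * ε) := by
  set η := ε / (2 * (N + 1)) with hη
  have hη0 : 0 < η := by positivity
  refine ⟨N * (η - 1 - Real.log η), fun w hw => ?_⟩
  rw [Real.rpow_def_of_pos (by positivity), Real.exp_le_exp]
  have h1 := Real.log_le_sub_one_of_pos (x := η * (1 + 2 * w)) (by positivity)
  rw [Real.log_mul hη0.ne' (by positivity)] at h1
  have h2 : N * (2 * η) ≤ ε := by
    have : 2 * (N + 1) * η = ε := by rw [hη]; field_simp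
    nlinarith
  calc Real.log (1 + 2 * w) * N ≤ (η * (1 + 2 * w) - 1 - Real.log η) * N := by
        gcongr
        linarith
    _ = N * (η - 1 - Real.log η) + w * (N * (2 * η)) := by ring
    _ ≤ _ := by gcongr

theorem lintegral_rpow_comp_add_le [MeasurableSpace V] [BorelSpace V] {μ : Measure V}
    [μ.IsAddRightInvariant] {p : V → ℝ}
    {F : V → ℂ} (hF : ∫⁻ x, ‖F x‖ₑ ^ p x ∂μ ≤ 1) (hp : ∀ x, 0 ≤ p x) {h : V} {A L m : ℝ}
    (hA : 0 ≤ A) (hm : Integrable (fun x => (1 + ‖x‖) ^ (-m)) μ) (hL : ∀ᵐ x ∂μ, ‖F x‖ ≤ L)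
    (hpt : ∀ x, ∀ t : ℝ, 0 ≤ t → t ≤ L →
      t ^ p x ≤ A * (t ^ p (x + h) + (1 + ‖x + h‖) ^ (-m))) :
    ∫⁻ x, ‖F (x + h)‖ₑ ^ p x ∂μ ≤ ENNReal.ofReal (A * (1 + ∫ x, (1 + ‖x‖) ^ (-m) ∂μ)) := by
  have hL' := (measurePreserving_add_right μ h).quasiMeasurePreserving.ae hL
  have hr : ∀ (z : ℂ) (x : V), ‖z‖ₑ ^ p x = ENNReal.ofReal (‖z‖ ^ p x) := fun z x => by
    rw [← ofReal_norm, ENNReal.ofReal_rpow_of_nonneg (norm_nonneg _) (hp x)]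
  have hnn : ∀ x : V, 0 ≤ (1 + ‖x‖) ^ (-m) := fun x => by positivity
  calc ∫⁻ x, ‖F (x + h)‖ₑ ^ p x ∂μ
      ≤ ∫⁻ x, ENNReal.ofReal A *
          (‖F (x + h)‖ₑ ^ p (x + h) + ENNReal.ofReal ((1 + ‖x + h‖) ^ (-m))) ∂μ := by
        refine lintegral_mono_ae ?_
        filter_upwards [hL'] with x hx
        rw [hr, hr, ← ENNReal.ofReal_add (by positivity) (hnn _), ← ENNReal.ofReal_mul hA]
        exact ENNReal.ofReal_le_ofReal (hpt x _ (norm_nonneg _) hx)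
    _ = ENNReal.ofReal A * (∫⁻ x, ‖F x‖ₑ ^ p x ∂μ +
          ∫⁻ x, ENNReal.ofReal ((1 + ‖x‖) ^ (-m)) ∂μ) := by
        rw [lintegral_const_mul' _ _ ENNReal.ofReal_ne_top,
          lintegral_add_right_eq_self
            (fun x => ‖F x‖ₑ ^ p x + ENNReal.ofReal ((1 + ‖x‖) ^ (-m))) h,
          lintegral_add_right _ (by fun_prop)]
    _ ≤ ENNReal.ofReal A * (1 + ENNReal.ofReal (∫ x, (1 + ‖x‖) ^ (-m) ∂μ)) := by
        rw [ofReal_integral_eq_lintegral_ofReal hm (Filter.Eventually.of_forall hnn)]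
        gcongr
    _ = _ := by
        rw [ENNReal.ofReal_mul hA, ENNReal.ofReal_add zero_le_one (integral_nonneg hnn),
          ENNReal.ofReal_one]

end VariableExponent

section Luxemburg

variable {n : ℕ} {p : EuclideanSpace ℝ (Fin n) → ℝ} {f g : EuclideanSpace ℝ (Fin n) → ℂ}

theorem luxNorm_le_mul_of_modular_le (hp : ∀ x, 1 ≤ p x) {μ B : ℝ≥0∞} (hμ0 : 0 < μ)
    (hB1 : 1 ≤ B) (hB : B ≠ ⊤)
    (hg : ∫⁻ x, (‖g x‖ₑ / μ) ^ p x ≤ B) : luxNorm p g ≤ B * μ := by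
  have hB0 : B ≠ 0 := (one_pos.trans_le hB1).ne'
  refine sInf_le ⟨ENNReal.mul_pos hB0 hμ0.ne', ?_⟩
  calc ∫⁻ x, ((‖g x‖₊ : ℝ≥0∞) / (B * μ)) ^ p x ≤ ∫⁻ x, B⁻¹ * (‖g x‖ₑ / μ) ^ p x := by
        refine lintegral_mono fun x => ?_
        have h1 : (‖g x‖₊ : ℝ≥0∞) / (B * μ) = B⁻¹ * (‖g x‖ₑ / μ) := by
          rw [div_eq_mul_inv, div_eq_mul_inv, ENNReal.mul_inv (Or.inl hB0) (Or.inl hB),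
            enorm_eq_nnnorm]
          ring
        rw [h1, ENNReal.mul_rpow_of_nonneg _ _ (by linarith [hp x])]
        gcongr
        simpa using ENNReal.rpow_le_rpow_of_exponent_ge (ENNReal.inv_le_one.2 hB1) (hp x)
    _ = B⁻¹ * ∫⁻ x, (‖g x‖ₑ / μ) ^ p x :=
        lintegral_const_mul' _ _ (ENNReal.inv_ne_top.2 hB0)
    _ ≤ B⁻¹ * B := by gcongr
    _ = 1 := ENNReal.inv_mul_cancel hB0 hB

theorem luxNorm_le_mul_luxNorm (hp : ∀ x, 1 ≤ p x) {B : ℝ≥0∞} (hB1 : 1 ≤ B) (hB : B ≠ ⊤)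
    (h : ∀ μ : ℝ≥0∞, 0 < μ → μ ≠ ⊤ → ∫⁻ x, (‖f x‖ₑ / μ) ^ p x ≤ 1 →
      ∫⁻ x, (‖g x‖ₑ / μ) ^ p x ≤ B) : luxNorm p g ≤ B * luxNorm p f := by
  have hB0 : B ≠ 0 := (one_pos.trans_le hB1).ne'
  rw [mul_comm, ← ENNReal.div_le_iff hB0 hB]
  refine le_sInf fun μ hμ => ?_
  rw [ENNReal.div_le_iff hB0 hB, mul_comm]
  rcases eq_or_ne μ ⊤ with rfl | hμt
  · simp [ENNReal.mul_top hB0]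
  · exact luxNorm_le_mul_of_modular_le hp hμ.1 hB1 hB (h μ hμ.1 hμt (by simpa only [enorm_eq_nnnorm] using hμ.2))

theorem luxNorm_comp_add_right_of_const {q : ℝ} (hp : ∀ x, p x = q)
    (h : EuclideanSpace ℝ (Fin n)) : luxNorm p (fun x => f (x + h)) = luxNorm p f := by
  simp only [luxNorm, hp]
  congr! 4 with μ
  rw [lintegral_add_right_eq_self (fun x => ((‖f x‖₊ : ℝ≥0∞) / μ) ^ q) h]

end Luxemburg

/-- Boundedness of the translation operator `τ_h f = f(· + h)` on `L^{p(·)}` for band-limited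
functions: if `p ∈ P^log`, `1 < p⁻ ≤ p⁺ < ∞`, and `supp 𝓕f ⊆ {|ξ| ≤ 2^{v+1}}`, then
`‖τ_h f‖_{p(·)} ≤ c exp((2 + 2^{vn}|h|) c_log(p)) ‖f‖_{p(·)}` with `c` independent of `h, v`. -/
theorem translation_bounded_bandlimited (n : ℕ) (p : EuclideanSpace ℝ (Fin n) → ℝ)
    (cLog cLogP pm pp pInf : ℝ) (hpmeas : Measurable p)
    (hpm : 1 < pm) (hbounds : ∀ x, pm ≤ p x ∧ p x ≤ pp)
    (hlog : ∀ x y, |1 / p x - 1 / p y| ≤ cLog / Real.log (Real.exp 1 + 1 / ‖x - y‖))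
    (hdecay : ∀ x, |1 / p x - 1 / pInf| ≤ cLog / Real.log (Real.exp 1 + ‖x‖))
    (hlogp : ∀ x y, |p x - p y| ≤ cLogP / Real.log (Real.exp 1 + 1 / ‖x - y‖)) :
    ∃ c > 0, ∀ (v : ℕ) (f : EuclideanSpace ℝ (Fin n) → ℂ) (h : EuclideanSpace ℝ (Fin n)),
      Measurable f → luxNorm p f < ⊤ →
      (∀ φ : 𝓢(EuclideanSpace ℝ (Fin n), ℂ),
        (∀ ξ ∈ tsupport ⇑φ, (2 : ℝ) ^ (v + 1) < ‖ξ‖) →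
        ∫ x, f x * fourierTransformCLM ℂ φ x = 0) →
      luxNorm p (fun x => f (x + h)) ≤
        ENNReal.ofReal (c * Real.exp ((2 + 2 ^ (v * n) * ‖h‖) * cLogP)) * luxNorm p f := by
  have hp1 : ∀ x, 1 ≤ p x := fun x => by linarith [(hbounds x).1]
  have hpp : ∀ x, p x ≤ pp := fun x => (hbounds x).2
  have ha : 0 ≤ cLogP := by simpa using hlogp 0 0
  have hb : 0 ≤ cLog := by simpa using hlog 0 0
  rcases Nat.eq_zero_or_pos n with rfl | hn
  · refine ⟨1, one_pos, fun v f h _ _ _ => ?_⟩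
    simp only [Subsingleton.elim h 0, add_zero]
    refine le_mul_of_one_le_left zero_le (ENNReal.one_le_ofReal.2 ?_)
    rw [one_mul]
    exact Real.one_le_exp (by positivity)
  rcases ha.eq_or_lt with rfl | ha0
  · refine ⟨1, one_pos, fun v f h _ _ _ => ?_⟩
    have hconst : ∀ x, p x = p 0 := fun x => by
      have := hlogp x 0
      rw [zero_div] at this
      exact sub_eq_zero.1 (abs_nonpos_iff.1 this)
    simp [luxNorm_comp_add_right_of_const hconst]
  obtain ⟨K, hK, hbdd⟩ := exists_ae_norm_le_of_bandlimited (V := EuclideanSpace ℝ (Fin n))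
  obtain ⟨C, N, hC, hN, hpt⟩ := exists_rpow_le_mul_rpow_add (b := pp ^ 2 * cLog) (by positivity) ha
    hp1 hpp hlogp (abs_sub_le_of_abs_one_div_sub_le hp1 hpp hdecay) hK
    (Module.finrank ℝ (EuclideanSpace ℝ (Fin n))) (m := n + 1) (by positivity)
  obtain ⟨D, hD⟩ := exists_one_add_rpow_le_exp ha0 hN
  have hint : Integrable fun x : EuclideanSpace ℝ (Fin n) => (1 + ‖x‖) ^ (-(n + 1 : ℝ)) :=
    integrable_one_add_norm (by simp)
  set I := ∫ x : EuclideanSpace ℝ (Fin n), (1 + ‖x‖) ^ (-(n + 1 : ℝ))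
  have hI : 0 ≤ I := integral_nonneg fun x => by positivity
  refine ⟨C * Real.exp D * (1 + I), by positivity, fun v f h hf _ hband => ?_⟩
  have hR : (1 : ℝ) ≤ 2 ^ (v + 1) := one_le_pow₀ one_le_two
  set A := C * (1 + 2 ^ (v + 1) * ‖h‖) ^ N
  have hA : 1 ≤ A := one_le_mul_of_one_le_of_one_le hC
    (Real.one_le_rpow (le_add_of_nonneg_right (by positivity)) hN)
  have hB1 : 1 ≤ A * (1 + I) := one_le_mul_of_one_le_of_one_le hA (by linarith)
  have hAle : A * (1 + I) ≤
      C * Real.exp D * (1 + I) * Real.exp ((2 + 2 ^ (v * n) * ‖h‖) * cLogP) := by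
    have h1 : (1 + 2 ^ (v + 1) * ‖h‖) ^ N ≤ Real.exp (D + 2 ^ v * ‖h‖ * cLogP) := by
      have h2 := hD (2 ^ v * ‖h‖) (by positivity)
      rwa [← mul_assoc, ← pow_succ'] at h2
    have h3 : (2 : ℝ) ^ v * ‖h‖ * cLogP ≤ (2 + 2 ^ (v * n) * ‖h‖) * cLogP := by
      have h4 : (2 : ℝ) ^ v ≤ 2 ^ (v * n) :=
        pow_le_pow_right₀ one_le_two (Nat.le_mul_of_pos_right v hn)
      have h5 : (2 : ℝ) ^ v * ‖h‖ ≤ 2 ^ (v * n) * ‖h‖ := by gcongr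
      gcongr
      linarith
    calc A * (1 + I) ≤ C * Real.exp (D + (2 + 2 ^ (v * n) * ‖h‖) * cLogP) * (1 + I) := by
          refine mul_le_mul_of_nonneg_right (mul_le_mul_of_nonneg_left (h1.trans ?_)
            (by linarith)) (by linarith)
          gcongr
      _ = _ := by
          rw [Real.exp_add]
          ring
  refine le_trans ?_ (mul_le_mul' (ENNReal.ofReal_le_ofReal hAle) le_rfl)
  refine luxNorm_le_mul_luxNorm hp1 (ENNReal.one_le_ofReal.2 hB1) ENNReal.ofReal_ne_top
    fun μ hμ0 hμt hmod => ?_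
  have hμr : 0 < μ.toReal := ENNReal.toReal_pos hμ0.ne' hμt
  set F : EuclideanSpace ℝ (Fin n) → ℂ := fun x => ((μ.toReal⁻¹ : ℝ) : ℂ) * f x with hFdef
  have hF : ∀ x, ‖F x‖ₑ = ‖f x‖ₑ / μ := fun x => by
    rw [hFdef, enorm_mul, ← ofReal_norm, Complex.norm_real, Real.norm_of_nonneg (by positivity),
      ENNReal.ofReal_inv_of_pos hμr, ENNReal.ofReal_toReal hμt, mul_comm, div_eq_mul_inv]
  simp only [← hF] at hmod ⊢
  have hL := hbdd p hp1 _ hR F (hf.const_mul _) hmod fun φ hφ => by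
    simp only [hFdef, mul_assoc]
    rw [integral_const_mul]
    exact mul_eq_zero_of_right _ (hband φ hφ)
  refine lintegral_rpow_comp_add_le hmod (fun x => by linarith [hp1 x]) (by linarith) hint hL
    fun x t ht0 ht => ?_
  simpa [A] using hpt _ hR x (x + h) t ht0 ht
end

section
/- Let p ∈ P^log with 1 < p^- ≤ p^+ < ∞, v ∈ ℕ₀, and f ∈ L^{p(·)} with supp 𝓕f ⊂ {ξ : |ξ| ≤ 2^{v+1}}. Then for any measurable g : ℝ^n → ℂ with ‖exp((2 + 2^{vn}|·|) c_log(p)) g‖_{L^1} < ∞, one has ‖f * g‖_{p(·)} ≤ c ‖exp((2 + 2^{vn}|·|) c_log(p)) g‖_{L^1} ‖f‖_{p(·)}, with c > 0 independent of v. -/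
open MeasureTheory ENNReal SchwartzMap

/-- The `L¹`-normalised (up to a constant) kernel `2^{vn} (1 + 2^v |x|)^{-m}`. -/
noncomputable def etaKernel (n v m : ℕ) (x : EuclideanSpace ℝ (Fin n)) : ℝ≥0∞ :=
  ENNReal.ofReal (2 ^ (v * n) * ((1 + 2 ^ v * ‖x‖) ^ m)⁻¹)

/-- The integral of `(1 + |x|)^{-(n+1)}` over `ℝⁿ`. -/
noncomputable def etaMass (n : ℕ) : ℝ≥0∞ :=
  ∫⁻ x : EuclideanSpace ℝ (Fin n), ENNReal.ofReal (((1 + ‖x‖) ^ (n + 1))⁻¹)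

lemma etaMass_lt_top (n : ℕ) : etaMass n < ⊤ := by
  have h := finite_integral_one_add_norm (E := EuclideanSpace ℝ (Fin n)) (μ := volume)
    (r := (n + 1 : ℕ)) (by simp)
  refine lt_of_le_of_lt (le_of_eq ?_) h
  unfold etaMass
  congr 1 with x
  rw [Real.rpow_neg (by positivity), Real.rpow_natCast]

@[fun_prop]
lemma measurable_etaKernel (n v m : ℕ) : Measurable (etaKernel n v m) := by
  unfold etaKernel
  fun_prop

lemma etaKernel_anti {n v m m' : ℕ} (h : m ≤ m') (x : EuclideanSpace ℝ (Fin n)) :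
    etaKernel n v m' x ≤ etaKernel n v m x := by
  unfold etaKernel
  have : (1 : ℝ) ≤ 1 + 2 ^ v * ‖x‖ := by
    have : 0 ≤ 2 ^ v * ‖x‖ := by positivity
    linarith
  gcongr

lemma etaKernel_le {n v m : ℕ} (x : EuclideanSpace ℝ (Fin n)) :
    etaKernel n v m x ≤ ENNReal.ofReal (2 ^ (v * n)) := by
  unfold etaKernel
  have : (1 : ℝ) ≤ 1 + 2 ^ v * ‖x‖ := by
    have : 0 ≤ 2 ^ v * ‖x‖ := by positivity
    linarith
  gcongr
  exact mul_le_of_le_one_right (by positivity) (inv_le_one_of_one_le₀ (one_le_pow₀ this))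

lemma mul_etaKernel_add {n v m M : ℕ} (x : EuclideanSpace ℝ (Fin n)) :
    ENNReal.ofReal ((1 + 2 ^ v * ‖x‖) ^ M) * etaKernel n v (M + m) x = etaKernel n v m x := by
  unfold etaKernel
  rw [← ENNReal.ofReal_mul (by positivity)]
  congr 1
  have : (0 : ℝ) < 1 + 2 ^ v * ‖x‖ := by positivity
  field_simp
  ring

lemma lintegral_etaKernel (n v : ℕ) : ∫⁻ x, etaKernel n v (n + 1) x = etaMass n := by
  have hc : (2 : ℝ) ^ v ≠ 0 := by positivity
  have hmap := Measure.map_addHaar_smul (volume : Measure (EuclideanSpace ℝ (Fin n))) hc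
  have h : ∫⁻ x : EuclideanSpace ℝ (Fin n),
      ENNReal.ofReal (((1 + ‖(2 : ℝ) ^ v • x‖) ^ (n + 1))⁻¹) =
      ENNReal.ofReal |(((2 : ℝ) ^ v) ^ n)⁻¹| * etaMass n := by
    rw [← lintegral_map (f := fun x : EuclideanSpace ℝ (Fin n) ↦
      ENNReal.ofReal (((1 + ‖x‖) ^ (n + 1))⁻¹)) (by fun_prop) (by fun_prop), hmap,
      lintegral_smul_measure]
    simp [etaMass]
  have h2 : ∀ x : EuclideanSpace ℝ (Fin n), etaKernel n v (n + 1) x =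
      ENNReal.ofReal (2 ^ (v * n)) *
        ENNReal.ofReal (((1 + ‖(2 : ℝ) ^ v • x‖) ^ (n + 1))⁻¹) := by
    intro x
    rw [← ENNReal.ofReal_mul (by positivity), norm_smul]
    simp [etaKernel]
  simp_rw [h2]
  rw [lintegral_const_mul _ (by fun_prop), h, ← mul_assoc, ← ENNReal.ofReal_mul (by positivity),
    abs_of_pos (by positivity), ← pow_mul, mul_inv_cancel₀ (by positivity)]
  simp

lemma lintegral_etaKernel_sub_left (n v : ℕ) (x : EuclideanSpace ℝ (Fin n)) :
    ∫⁻ y, etaKernel n v (n + 1) (x - y) = etaMass n := by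
  rw [lintegral_sub_left_eq_self (fun y ↦ etaKernel n v (n + 1) y) x, lintegral_etaKernel]

lemma lintegral_etaKernel_sub_right (n v : ℕ) (y : EuclideanSpace ℝ (Fin n)) :
    ∫⁻ x, etaKernel n v (n + 1) (x - y) = etaMass n := by
  rw [lintegral_sub_right_eq_self (fun y ↦ etaKernel n v (n + 1) y) y, lintegral_etaKernel]

/-- Tonelli for averages against `etaKernel`. -/
lemma lintegral_lintegral_mul_etaKernel {n v : ℕ} {F : EuclideanSpace ℝ (Fin n) → ℝ≥0∞}
    (hF : Measurable F) :
    ∫⁻ x, ∫⁻ y, F y * etaKernel n v (n + 1) (x - y) = (∫⁻ y, F y) * etaMass n := by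
  rw [lintegral_lintegral_swap (by fun_prop), ← lintegral_mul_const _ hF]
  congr 1 with y
  rw [lintegral_const_mul _ (by fun_prop), lintegral_etaKernel_sub_right]

/-- Jensen's inequality for the power `p ≥ 1` and the weight `K`. -/
lemma rpow_lintegral_mul_le {α : Type*} [MeasurableSpace α] {μ : Measure α} {F K : α → ℝ≥0∞}
    (hF : Measurable F) (hK : Measurable K) {p : ℝ} (hp : 1 ≤ p) :
    (∫⁻ x, F x * K x ∂μ) ^ p ≤ (∫⁻ x, K x ∂μ) ^ (p - 1) * ∫⁻ x, F x ^ p * K x ∂μ := by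
  rcases hp.eq_or_lt with rfl | hp
  · simp
  have hpq := Real.HolderConjugate.conjExponent hp
  have h := ENNReal.lintegral_mul_le_Lp_mul_Lq (μ.withDensity K) hpq hF.aemeasurable
    (aemeasurable_const (b := (1 : ℝ≥0∞)))
  simp only [Pi.mul_apply, mul_one, one_rpow] at h
  rw [lintegral_withDensity_eq_lintegral_mul _ hK hF,
    lintegral_withDensity_eq_lintegral_mul _ hK (hF.pow_const p),
    lintegral_withDensity_eq_lintegral_mul _ hK measurable_const] at h
  simp only [Pi.mul_apply, mul_comm (K _), one_mul] at h
  calc _ ≤ ((∫⁻ x, F x ^ p * K x ∂μ) ^ (1 / p) *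
        (∫⁻ x, K x ∂μ) ^ (1 / p.conjExponent)) ^ p := by
        gcongr
    _ = _ := by
      rw [ENNReal.mul_rpow_of_nonneg _ _ (by linarith), ← ENNReal.rpow_mul, ← ENNReal.rpow_mul,
        mul_comm]
      have : p - 1 ≠ 0 := by linarith
      congr 2
      · rw [Real.conjExponent]; field_simp
      · rw [one_div_mul_cancel (by linarith), ENNReal.rpow_one]

/-- Log-Hölder continuity lets one exchange exponents in powers of the scale. -/
lemma two_pow_rpow_abs_sub_le {n v M : ℕ} {p : EuclideanSpace ℝ (Fin n) → ℝ} {c : ℝ}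
    (hlogp : ∀ x y, |p x - p y| ≤ c / Real.log (Real.exp 1 + 1 / ‖x - y‖))
    (hM : n * c ≤ M) (x y : EuclideanSpace ℝ (Fin n)) :
    ((2 : ℝ) ^ (v * n)) ^ |p x - p y| ≤ Real.exp M * (1 + 2 ^ v * ‖x - y‖) ^ M := by
  have hs : (1 : ℝ) ≤ 1 + 2 ^ v * ‖x - y‖ := by
    have : 0 ≤ 2 ^ v * ‖x - y‖ := by positivity
    linarith
  by_cases hxy : x = y
  · subst hxy
    simp
  have hr : 0 < ‖x - y‖ := norm_pos_iff.2 (sub_ne_zero.2 hxy)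
  have he : Real.exp 1 ≤ Real.exp 1 + 1 / ‖x - y‖ := by
    have : 0 < 1 / ‖x - y‖ := by positivity
    linarith
  have hL : 1 ≤ Real.log (Real.exp 1 + 1 / ‖x - y‖) := by
    rw [Real.le_log_iff_exp_le (by positivity)]
    exact he
  have hlog2 : v * Real.log 2 ≤
      Real.log (Real.exp 1 + 1 / ‖x - y‖) + Real.log (1 + 2 ^ v * ‖x - y‖) := by
    rw [← Real.log_pow, ← Real.log_mul (by positivity) (by positivity)]
    apply Real.log_le_log (by positivity)
    calc (2 : ℝ) ^ v = (1 / ‖x - y‖) * (2 ^ v * ‖x - y‖) := by field_simp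
      _ ≤ _ := by
        gcongr
        · linarith [Real.exp_pos 1]
        · linarith
  have hd := hlogp x y
  rw [le_div_iff₀ (by linarith)] at hd
  have h0 := abs_nonneg (p x - p y)
  have hd1 : |p x - p y| ≤ c := by nlinarith
  have hlogs : 0 ≤ Real.log (1 + 2 ^ v * ‖x - y‖) := Real.log_nonneg hs
  rw [← Real.log_le_log_iff (by positivity) (by positivity), Real.log_rpow (by positivity),
    Real.log_mul (by positivity) (by positivity), Real.log_exp, Real.log_pow, Real.log_pow]
  push_cast
  calc |p x - p y| * (v * n * Real.log 2) = n * (|p x - p y| * (v * Real.log 2)) := by ring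
    _ ≤ n * (c + c * Real.log (1 + 2 ^ v * ‖x - y‖)) := by
      gcongr
      calc |p x - p y| * (v * Real.log 2) ≤ |p x - p y| *
            (Real.log (Real.exp 1 + 1 / ‖x - y‖) + Real.log (1 + 2 ^ v * ‖x - y‖)) := by gcongr
        _ = |p x - p y| * Real.log (Real.exp 1 + 1 / ‖x - y‖) +
          |p x - p y| * Real.log (1 + 2 ^ v * ‖x - y‖) := by ring
        _ ≤ _ := by gcongr
    _ = n * c + n * c * Real.log (1 + 2 ^ v * ‖x - y‖) := by ring
    _ ≤ _ := by gcongr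

/-- Log-Hölder decay lets one exchange exponents in powers of `e + |y|`. -/
lemma exp_add_norm_rpow_abs_sub_le {E : Type*} [SeminormedAddCommGroup E] {p : E → ℝ} {A : ℝ}
    (hA : 0 ≤ A)
    (hp : ∀ x y, |p x - p y| ≤
      A / Real.log (Real.exp 1 + ‖x‖) + A / Real.log (Real.exp 1 + ‖y‖)) (x y : E) :
    (Real.exp 1 + ‖y‖) ^ |p x - p y| ≤ Real.exp (2 * A) * (1 + ‖x - y‖) ^ A := by
  have hL : ∀ z : E, 1 ≤ Real.log (Real.exp 1 + ‖z‖) := fun z ↦ by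
    rw [Real.le_log_iff_exp_le (by positivity)]
    linarith [norm_nonneg z]
  have hlogs : 0 ≤ Real.log (1 + ‖x - y‖) := Real.log_nonneg (by linarith [norm_nonneg (x - y)])
  have hxy : Real.log (Real.exp 1 + ‖y‖) ≤
      Real.log (Real.exp 1 + ‖x‖) + Real.log (1 + ‖x - y‖) := by
    rw [← Real.log_mul (by positivity) (by positivity)]
    apply Real.log_le_log (by positivity)
    have h1 : ‖y‖ ≤ ‖x‖ + ‖x - y‖ := by
      rw [← norm_sub_rev y x]
      exact norm_le_insert' y x
    have h2 : 1 ≤ Real.exp 1 + ‖x‖ := by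
      linarith [norm_nonneg x, Real.add_one_le_exp 1]
    nlinarith [norm_nonneg (x - y)]
  rw [← Real.log_le_log_iff (by positivity) (by positivity), Real.log_rpow (by positivity),
    Real.log_mul (by positivity) (by positivity), Real.log_exp, Real.log_rpow (by positivity)]
  have hx := hL x
  have hy := hL y
  calc |p x - p y| * Real.log (Real.exp 1 + ‖y‖)
      ≤ (A / Real.log (Real.exp 1 + ‖x‖) + A / Real.log (Real.exp 1 + ‖y‖)) *
        Real.log (Real.exp 1 + ‖y‖) := by
        gcongr
        exact hp x y
    _ = A / Real.log (Real.exp 1 + ‖x‖) * Real.log (Real.exp 1 + ‖y‖) + A := by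
        rw [add_mul, div_mul_cancel₀ A (by linarith)]
    _ ≤ A / Real.log (Real.exp 1 + ‖x‖) *
        (Real.log (Real.exp 1 + ‖x‖) + Real.log (1 + ‖x - y‖)) + A := by gcongr
    _ = A + A / Real.log (Real.exp 1 + ‖x‖) * Real.log (1 + ‖x - y‖) + A := by
        rw [mul_add, div_mul_cancel₀ A (by linarith)]
    _ ≤ A + A * Real.log (1 + ‖x - y‖) + A := by
        gcongr
        exact div_le_self hA hx
    _ = _ := by ring

lemma rpow_le_add_mul_rpow {t T u q r B : ℝ} (ht : 0 ≤ t) (htT : t ≤ T) (hT : 1 ≤ T) (hu : 0 < u)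
    (hu1 : u ≤ 1) (hq : 1 ≤ q) (hTB : T ^ |q - r| ≤ B) (huB : u⁻¹ ^ |q - r| ≤ B) :
    t ^ q ≤ u + B * t ^ r := by
  have hB : 0 ≤ B := le_trans (by positivity) hTB
  have hr : 0 ≤ t ^ r := by positivity
  rcases le_or_gt t u with h | h
  · have : t ^ q ≤ t := by
      simpa using Real.rpow_le_rpow_of_exponent_ge_of_imp ht (h.trans hu1) hq (by intros; linarith)
    have := mul_nonneg hB hr
    linarith
  have ht0 : 0 < t := hu.trans h
  have key : t ^ (q - r) ≤ B := by
    rcases le_or_gt t 1 with h1 | h1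
    · calc t ^ (q - r) ≤ t ^ (-|q - r|) :=
            Real.rpow_le_rpow_of_exponent_ge ht0 h1 (neg_abs_le _)
        _ = t⁻¹ ^ |q - r| := by rw [Real.rpow_neg ht, Real.inv_rpow ht]
        _ ≤ u⁻¹ ^ |q - r| := by gcongr
        _ ≤ B := huB
    · calc t ^ (q - r) ≤ t ^ |q - r| :=
            Real.rpow_le_rpow_of_exponent_le h1.le (le_abs_self _)
        _ ≤ T ^ |q - r| := by gcongr
        _ ≤ B := hTB
  calc t ^ q = t ^ (q - r) * t ^ r := by rw [← Real.rpow_add ht0]; simp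
    _ ≤ B * t ^ r := by gcongr
    _ ≤ _ := by linarith

lemma le_mul_rpow_of_lt {t T q r B : ℝ} (hT : 1 ≤ T) (htT : T < t) (hr : 1 ≤ r)
    (hTB : T ^ |q - r| ≤ B) : t ≤ T ^ (1 - q) * (B * t ^ r) := by
  have hT0 : 0 < T := by linarith
  have ht : 0 < t := by linarith
  calc t = t ^ (1 - r) * t ^ r := by rw [← Real.rpow_add ht]; simp
    _ ≤ T ^ (1 - r) * t ^ r := by
      gcongr ?_ * _
      exact Real.rpow_le_rpow_of_nonpos hT0 htT.le (by linarith)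
    _ = T ^ (1 - q) * (T ^ (q - r) * t ^ r) := by
      rw [← mul_assoc, ← Real.rpow_add hT0]; ring_nf
    _ ≤ _ := by
      gcongr
      exact (Real.rpow_le_rpow_of_exponent_le hT (le_abs_self _)).trans hTB

section Modular

variable {n M v : ℕ} {p : EuclideanSpace ℝ (Fin n) → ℝ} {pp C : ℝ}
  {a : EuclideanSpace ℝ (Fin n) → ℝ}

lemma rpow_lintegral_small_le (hp : Measurable p) (hbounds : ∀ x, 1 ≤ p x ∧ p x ≤ pp) (hC : 1 ≤ C)
    (hloc : ∀ x y, ((2 : ℝ) ^ (v * n)) ^ |p x - p y| ≤ C * (1 + 2 ^ v * ‖x - y‖) ^ M)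
    (hinf : ∀ x y, ((Real.exp 1 + ‖y‖) ^ (n + 1)) ^ |p x - p y| ≤ C * (1 + ‖x - y‖) ^ M)
    (ha : Measurable a) (ha0 : ∀ y, 0 ≤ a y) (haT : ∀ y, a y ≤ 2 ^ (v * n))
    (x : EuclideanSpace ℝ (Fin n)) :
    (∫⁻ y, ENNReal.ofReal (a y) * etaKernel n v (M + (n + 1)) (x - y)) ^ p x ≤
      max 1 (etaMass n) ^ pp * ENNReal.ofReal C *
        ∫⁻ y, (ENNReal.ofReal (((1 + ‖y‖) ^ (n + 1))⁻¹) + ENNReal.ofReal (a y ^ p y)) *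
          etaKernel n v (n + 1) (x - y) := by
  have hpx := hbounds x
  have hpt : ∀ y, ENNReal.ofReal (a y) ^ p x * etaKernel n v (M + (n + 1)) (x - y) ≤
      ENNReal.ofReal C * ((ENNReal.ofReal (((1 + ‖y‖) ^ (n + 1))⁻¹) + ENNReal.ofReal (a y ^ p y)) *
          etaKernel n v (n + 1) (x - y)) := by
    intro y
    have hs : (1 : ℝ) ≤ 1 + 2 ^ v * ‖x - y‖ := by
      have : 0 ≤ 2 ^ v * ‖x - y‖ := by positivity
      linarith
    have h2v : (1 : ℝ) ≤ 2 ^ v := one_le_pow₀ (by norm_num)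
    have he : (1 : ℝ) ≤ Real.exp 1 := by linarith [Real.add_one_le_exp 1]
    have h1 : (1 : ℝ) ≤ (Real.exp 1 + ‖y‖) ^ (n + 1) :=
      one_le_pow₀ (by linarith [norm_nonneg y])
    have hay := ha0 y
    have key := rpow_le_add_mul_rpow (u := ((Real.exp 1 + ‖y‖) ^ (n + 1))⁻¹) (ha0 y) (haT y)
      (one_le_pow₀ (by norm_num)) (by positivity) (inv_le_one_of_one_le₀ h1) hpx.1
      (hloc x y) (by
        rw [inv_inv]
        refine (hinf x y).trans ?_
        gcongr
        exact le_mul_of_one_le_left (norm_nonneg _) h2v)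
    have key2 : a y ^ p x ≤ C * ((((1 + ‖y‖) ^ (n + 1))⁻¹ + a y ^ p y) *
        (1 + 2 ^ v * ‖x - y‖) ^ M) := by
      have hCs : 1 ≤ C * (1 + 2 ^ v * ‖x - y‖) ^ M :=
        one_le_mul_of_one_le_of_one_le hC (one_le_pow₀ hs)
      calc _ ≤ _ := key
        _ ≤ ((1 + ‖y‖) ^ (n + 1))⁻¹ + C * (1 + 2 ^ v * ‖x - y‖) ^ M * a y ^ p y := by gcongr
        _ ≤ (C * (1 + 2 ^ v * ‖x - y‖) ^ M) * ((1 + ‖y‖) ^ (n + 1))⁻¹ +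
            C * (1 + 2 ^ v * ‖x - y‖) ^ M * a y ^ p y := by
          gcongr
          exact le_mul_of_one_le_left (by positivity) hCs
        _ = _ := by ring
    rw [ENNReal.ofReal_rpow_of_nonneg hay (by linarith), ← mul_etaKernel_add (M := M) (m := n + 1),
      ← ENNReal.ofReal_add (by positivity) (by positivity), ← mul_assoc, ← mul_assoc,
      ← ENNReal.ofReal_mul (by positivity), ← ENNReal.ofReal_mul (by positivity)]
    gcongr
    rw [mul_assoc]
    exact key2
  calc _ ≤ (∫⁻ y, etaKernel n v (M + (n + 1)) (x - y)) ^ (p x - 1) *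
        ∫⁻ y, ENNReal.ofReal (a y) ^ p x * etaKernel n v (M + (n + 1)) (x - y) :=
        rpow_lintegral_mul_le (by fun_prop) (by fun_prop) hpx.1
    _ ≤ max 1 (etaMass n) ^ pp * (ENNReal.ofReal C *
        ∫⁻ y, (ENNReal.ofReal (((1 + ‖y‖) ^ (n + 1))⁻¹) + ENNReal.ofReal (a y ^ p y)) *
          etaKernel n v (n + 1) (x - y)) := by
      rw [← lintegral_const_mul (ENNReal.ofReal C) (by fun_prop)]
      gcongr ?_ * ?_
      · calc (∫⁻ y, etaKernel n v (M + (n + 1)) (x - y)) ^ (p x - 1)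
            ≤ max 1 (etaMass n) ^ (p x - 1) := by
              refine ENNReal.rpow_le_rpow ?_ (by linarith)
              rw [← lintegral_etaKernel_sub_left n v x]
              refine le_max_of_le_right (lintegral_mono fun y ↦ etaKernel_anti (by omega) _)
          _ ≤ _ := ENNReal.rpow_le_rpow_of_exponent_le (le_max_left _ _) (by linarith)
      · exact lintegral_mono hpt
    _ = _ := by rw [mul_assoc]

lemma rpow_lintegral_large_le (hp : Measurable p) (hbounds : ∀ x, 1 ≤ p x ∧ p x ≤ pp) (hC : 1 ≤ C)
    (hloc : ∀ x y, ((2 : ℝ) ^ (v * n)) ^ |p x - p y| ≤ C * (1 + 2 ^ v * ‖x - y‖) ^ M)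
    (ha : Measurable a) (ha0 : ∀ y, 0 ≤ a y) (haT : ∀ y, a y = 0 ∨ 2 ^ (v * n) < a y)
    (hmod : ∫⁻ y, ENNReal.ofReal (a y ^ p y) ≤ 1) (x : EuclideanSpace ℝ (Fin n)) :
    (∫⁻ y, ENNReal.ofReal (a y) * etaKernel n v (M + (n + 1)) (x - y)) ^ p x ≤
      ENNReal.ofReal C ^ pp *
        ∫⁻ y, ENNReal.ofReal (a y ^ p y) * etaKernel n v (n + 1) (x - y) := by
  have hpx := hbounds x
  have hT : (1 : ℝ) ≤ 2 ^ (v * n) := one_le_pow₀ (by norm_num)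
  set T : ℝ := 2 ^ (v * n) with hTdef
  have hT0 : 0 < T := by linarith
  set J := ∫⁻ y, ENNReal.ofReal (a y ^ p y) * etaKernel n v (n + 1) (x - y) with hJ
  have hJT : J ≤ ENNReal.ofReal T := by
    calc J ≤ ∫⁻ y, ENNReal.ofReal (a y ^ p y) * ENNReal.ofReal T := by
          refine lintegral_mono fun y ↦ ?_
          gcongr
          exact etaKernel_le _
      _ = (∫⁻ y, ENNReal.ofReal (a y ^ p y)) * ENNReal.ofReal T :=
        lintegral_mul_const _ (by fun_prop)
      _ ≤ 1 * ENNReal.ofReal T := by gcongr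
      _ = _ := one_mul _
  have hpt : ∀ y, ENNReal.ofReal (a y) * etaKernel n v (M + (n + 1)) (x - y) ≤
      ENNReal.ofReal (C * T ^ (1 - p x)) *
        (ENNReal.ofReal (a y ^ p y) * etaKernel n v (n + 1) (x - y)) := by
    intro y
    have hay := ha0 y
    rcases haT y with h | h
    · simp [h]
    have key := le_mul_rpow_of_lt hT h (hbounds y).1 (hloc x y)
    rw [← mul_etaKernel_add (M := M) (m := n + 1), ← mul_assoc, ← mul_assoc,
      ← ENNReal.ofReal_mul (by positivity), ← ENNReal.ofReal_mul (by positivity)]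
    gcongr
    refine key.trans (le_of_eq ?_)
    ring
  have hH : ∫⁻ y, ENNReal.ofReal (a y) * etaKernel n v (M + (n + 1)) (x - y) ≤
      ENNReal.ofReal (C * T ^ (1 - p x)) * J := by
    rw [hJ, ← lintegral_const_mul _ (by fun_prop)]
    exact lintegral_mono hpt
  have hJ0 : J ≠ ⊤ := ne_top_of_le_ne_top ENNReal.ofReal_ne_top hJT
  calc _ ≤ (ENNReal.ofReal (C * T ^ (1 - p x)) * J) ^ p x := by gcongr; linarith
    _ = ENNReal.ofReal C ^ p x * ENNReal.ofReal (T ^ ((1 - p x) * p x)) * J ^ p x := by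
      rw [ENNReal.mul_rpow_of_nonneg _ _ (by linarith), ENNReal.ofReal_mul (by linarith),
        ENNReal.mul_rpow_of_nonneg _ _ (by linarith),
        ENNReal.ofReal_rpow_of_nonneg (x := T ^ (1 - p x)) (by positivity) (by linarith),
        ← Real.rpow_mul hT0.le]
    _ = ENNReal.ofReal C ^ p x * ENNReal.ofReal (T ^ ((1 - p x) * p x)) *
        (J ^ (p x - 1) * J) := by
      congr 1
      nth_rewrite 3 [← ENNReal.rpow_one J]
      rw [← ENNReal.rpow_add_of_nonneg _ _ (by linarith) (by norm_num)]
      congr 1; ring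
    _ ≤ ENNReal.ofReal C ^ pp * ENNReal.ofReal (T ^ ((1 - p x) * p x)) *
        (ENNReal.ofReal T ^ (p x - 1) * J) := by
      gcongr
      · exact ENNReal.one_le_ofReal.2 hC
      · exact hpx.2
      · linarith
    _ = ENNReal.ofReal C ^ pp * (ENNReal.ofReal (T ^ ((1 - p x) * p x + (p x - 1))) * J) := by
      rw [ENNReal.ofReal_rpow_of_nonneg hT0.le (by linarith), Real.rpow_add hT0,
        ENNReal.ofReal_mul (by positivity)]
      ring
    _ ≤ ENNReal.ofReal C ^ pp * (1 * J) := by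
      gcongr
      rw [ENNReal.ofReal_le_one]
      apply Real.rpow_le_one_of_one_le_of_nonpos hT
      nlinarith [sq_nonneg (p x - 1)]
    _ = _ := by rw [one_mul]

/-- Modular boundedness of averages against `etaKernel`, uniformly in the scale. -/
lemma exists_lintegral_rpow_lintegral_etaKernel_le (hp : Measurable p)
    (hbounds : ∀ x, 1 ≤ p x ∧ p x ≤ pp) (hC : 1 ≤ C)
    (hloc : ∀ (v : ℕ) x y, ((2 : ℝ) ^ (v * n)) ^ |p x - p y| ≤ C * (1 + 2 ^ v * ‖x - y‖) ^ M)
    (hinf : ∀ x y, ((Real.exp 1 + ‖y‖) ^ (n + 1)) ^ |p x - p y| ≤ C * (1 + ‖x - y‖) ^ M) :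
    ∃ D : ℝ≥0∞, 1 ≤ D ∧ D ≠ ⊤ ∧ ∀ (v : ℕ) (a : EuclideanSpace ℝ (Fin n) → ℝ), Measurable a →
      (∀ y, 0 ≤ a y) → ∫⁻ y, ENNReal.ofReal (a y ^ p y) ≤ 1 →
      ∫⁻ x, (∫⁻ y, ENNReal.ofReal (a y) * etaKernel n v (M + (n + 1)) (x - y)) ^ p x ≤ D := by
  have hI := etaMass_lt_top n
  have hpp : 1 ≤ pp := (hbounds 0).1.trans (hbounds 0).2
  set C₁ := max 1 (etaMass n) ^ pp * ENNReal.ofReal C with hC₁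
  set C₂ := ENNReal.ofReal C ^ pp with hC₂
  have hC₁t : C₁ ≠ ⊤ := by
    refine ENNReal.mul_ne_top (ENNReal.rpow_ne_top_of_nonneg (by linarith) ?_) ENNReal.ofReal_ne_top
    exact (max_lt ENNReal.one_lt_top hI).ne
  have hC₂t : C₂ ≠ ⊤ := ENNReal.rpow_ne_top_of_nonneg (by linarith) ENNReal.ofReal_ne_top
  refine ⟨1 + 2 ^ (pp - 1) * (C₁ + C₂) * ((etaMass n + 1) * etaMass n), le_self_add, ?_, ?_⟩
  · have := hI.ne
    have : (2 : ℝ≥0∞) ^ (pp - 1) ≠ ⊤ := ENNReal.rpow_ne_top_of_nonneg (by linarith) (by simp)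
    finiteness
  intro v a ha ha0 hmod
  set W : EuclideanSpace ℝ (Fin n) → ℝ≥0∞ := fun y ↦ ENNReal.ofReal (((1 + ‖y‖) ^ (n + 1))⁻¹)
    with hW
  have hWm : Measurable W := by fun_prop
  set S : Set (EuclideanSpace ℝ (Fin n)) := {y | a y ≤ 2 ^ (v * n)} with hS
  have hSm : MeasurableSet S := measurableSet_le ha measurable_const
  set b := S.indicator a with hb
  set d := Sᶜ.indicator a with hd
  have hbm : Measurable b := ha.indicator hSm
  have hdm : Measurable d := ha.indicator hSm.compl
  have hb0 : ∀ y, 0 ≤ b y := fun y ↦ Set.indicator_nonneg (fun y _ ↦ ha0 y) y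
  have hd0 : ∀ y, 0 ≤ d y := fun y ↦ Set.indicator_nonneg (fun y _ ↦ ha0 y) y
  have hba : ∀ y, b y ≤ a y := fun y ↦ Set.indicator_le_self' (fun y _ ↦ ha0 y) y
  have hda : ∀ y, d y ≤ a y := fun y ↦ Set.indicator_le_self' (fun y _ ↦ ha0 y) y
  have habd : ∀ y, a y = b y + d y := fun y ↦ (congrFun (S.indicator_self_add_compl a) y).symm
  have hbT : ∀ y, b y ≤ 2 ^ (v * n) := fun y ↦ by
    by_cases hy : y ∈ S
    · rw [hb, Set.indicator_of_mem hy]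
      exact hy
    · simp [hb, hy]
  have hdT : ∀ y, d y = 0 ∨ 2 ^ (v * n) < d y := fun y ↦ by
    by_cases hy : y ∈ S
    · simp [hd, hy]
    · right
      rw [hd, Set.indicator_of_mem (Set.mem_compl hy)]
      exact not_le.1 hy
  have hp0 : ∀ x, 0 ≤ p x := fun x ↦ by linarith [(hbounds x).1]
  have hdmod : ∫⁻ y, ENNReal.ofReal (d y ^ p y) ≤ 1 := by
    refine le_trans (lintegral_mono fun y ↦ ENNReal.ofReal_le_ofReal ?_) hmod
    exact Real.rpow_le_rpow (hd0 y) (hda y) (hp0 y)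
  have hpt : ∀ x, (∫⁻ y, ENNReal.ofReal (a y) * etaKernel n v (M + (n + 1)) (x - y)) ^ p x ≤
      2 ^ (pp - 1) * (C₁ + C₂) *
        ∫⁻ y, (W y + ENNReal.ofReal (a y ^ p y)) * etaKernel n v (n + 1) (x - y) := by
    intro x
    have hsplit : ∫⁻ y, ENNReal.ofReal (a y) * etaKernel n v (M + (n + 1)) (x - y) =
        (∫⁻ y, ENNReal.ofReal (b y) * etaKernel n v (M + (n + 1)) (x - y)) +
        ∫⁻ y, ENNReal.ofReal (d y) * etaKernel n v (M + (n + 1)) (x - y) := by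
      rw [← lintegral_add_left (by fun_prop)]
      congr 1 with y
      rw [← add_mul, ← ENNReal.ofReal_add (hb0 y) (hd0 y), ← habd]
    have h1 := rpow_lintegral_small_le hp hbounds hC (hloc v) hinf hbm hb0 hbT x
    have h2 := rpow_lintegral_large_le hp hbounds hC (hloc v) hdm hd0 hdT hdmod x
    rw [hsplit]
    refine (ENNReal.rpow_add_le_mul_rpow_add_rpow _ _ (hbounds x).1).trans ?_
    rw [mul_assoc, add_mul]
    gcongr
    · exact one_le_two
    · exact (hbounds x).2
    · refine h1.trans ?_
      gcongr with y
      exacts [hb0 y, hp0 y, hba y]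
    · refine h2.trans ?_
      gcongr with y
      refine le_add_left (ENNReal.ofReal_le_ofReal ?_)
      exact Real.rpow_le_rpow (hd0 y) (hda y) (hp0 y)
  calc _ ≤ ∫⁻ x, 2 ^ (pp - 1) * (C₁ + C₂) *
        ∫⁻ y, (W y + ENNReal.ofReal (a y ^ p y)) * etaKernel n v (n + 1) (x - y) :=
        lintegral_mono hpt
    _ = 2 ^ (pp - 1) * (C₁ + C₂) *
        ((∫⁻ y, (W y + ENNReal.ofReal (a y ^ p y))) * etaMass n) := by
      rw [lintegral_const_mul _ (by fun_prop), lintegral_lintegral_mul_etaKernel (by fun_prop)]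
    _ ≤ 2 ^ (pp - 1) * (C₁ + C₂) * ((etaMass n + 1) * etaMass n) := by
      rw [lintegral_add_left hWm]
      gcongr
      exact le_rfl
    _ ≤ _ := le_add_self

end Modular

section Reproducing

open FourierTransform

lemma SchwartzMap.exists_norm_le_inv_one_add_pow {E F : Type*} [NormedAddCommGroup E]
    [NormedSpace ℝ E] [NormedAddCommGroup F] [NormedSpace ℝ F] (f : 𝓢(E, F)) (m : ℕ) :
    ∃ C : ℝ, 0 < C ∧ ∀ x, ‖f x‖ ≤ C * ((1 + ‖x‖) ^ m)⁻¹ := by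
  refine ⟨2 ^ m * (Finset.Iic (m, 0)).sup (fun k ↦ SchwartzMap.seminorm ℝ k.1 k.2) f + 1,
    by positivity, fun x ↦ ?_⟩
  have h := SchwartzMap.one_add_le_sup_seminorm_apply (𝕜 := ℝ) (m := (m, 0)) le_rfl le_rfl f x
  rw [norm_iteratedFDeriv_zero] at h
  rw [← div_eq_mul_inv, le_div_iff₀ (by positivity), mul_comm]
  linarith

/-- The Fourier transform of a product is the convolution of the Fourier transforms. -/
lemma SchwartzMap.fourier_smulLeftCLM_apply {V : Type*} [NormedAddCommGroup V]
    [InnerProductSpace ℝ V] [FiniteDimensional ℝ V] [MeasurableSpace V] [BorelSpace V]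
    (ψ φ : 𝓢(V, ℂ)) (x : V) :
    𝓕 (smulLeftCLM ℂ ψ φ) x = ∫ z, 𝓕 φ z * 𝓕 ψ (x - z) := by
  have hG : Integrable (fun z ↦ 𝓕 ψ (x - z)) :=
    ((𝓕 ψ : 𝓢(V, ℂ)).integrable (μ := volume)).comp_sub_left x
  have h := VectorFourier.integral_bilin_fourierIntegral_eq_flip (ContinuousLinearMap.mul ℂ ℂ)
    (L := innerₗ V) Real.continuous_fourierChar continuous_inner (φ.integrable (μ := volume)) hG
  rw [flip_innerₗ] at h
  have hGF : ∀ ξ, VectorFourier.fourierIntegral Real.fourierChar volume (innerₗ V)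
      (fun z ↦ 𝓕 ψ (x - z)) ξ = Real.fourierChar (-inner ℝ ξ x) • ψ ξ := by
    intro ξ
    have hinv : 𝓕⁻ (𝓕 ψ) ξ = ψ ξ := by simp
    rw [fourierInv_coe, Real.fourierInv_eq] at hinv
    rw [← hinv, VectorFourier.fourierIntegral, ← integral_sub_left_eq_self _ _ x, Circle.smul_def,
      ← integral_smul]
    congr 1 with z
    have hsum : -innerₗ V (x - z) ξ = -inner ℝ ξ x + inner ℝ z ξ := by
      simp only [innerₗ_apply_apply, inner_sub_left, real_inner_comm x ξ]
      ring
    rw [hsum, AddChar.map_add_eq_mul, mul_smul]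
    simp only [Circle.smul_def, _root_.sub_sub_cancel x z]
  simp only [ContinuousLinearMap.mul_apply', hGF] at h
  rw [fourier_coe, Real.fourier_eq]
  refine Eq.trans ?_ h.symm
  congr 1 with ξ
  rw [smulLeftCLM_apply_apply ψ.hasTemperateGrowth]
  simp only [Circle.smul_def, smul_eq_mul]
  ring

/-- Smooth frequency cut-offs at scale `2^v` whose Fourier transforms are controlled by
`etaKernel`, uniformly in `v`. -/
lemma exists_cutoff_fourier_le (n m : ℕ) : ∃ C : ℝ, 0 < C ∧ ∀ v : ℕ,
    ∃ ψ : 𝓢(EuclideanSpace ℝ (Fin n), ℂ), (∀ ξ, ‖ξ‖ < 2 ^ (v + 2) → ψ ξ = 1) ∧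
      ∀ x, ‖𝓕 ψ x‖ₑ ≤ ENNReal.ofReal C * etaKernel n v m x := by
  let b : ContDiffBump (0 : EuclideanSpace ℝ (Fin n)) := ⟨4, 5, by norm_num, by norm_num⟩
  have hbs : HasCompactSupport (fun x ↦ (b x : ℂ)) :=
    b.hasCompactSupport.comp_left (g := fun t : ℝ ↦ (t : ℂ)) (by simp)
  have hbd : ContDiff ℝ ((⊤ : ℕ∞) : WithTop ℕ∞) (fun x ↦ (b x : ℂ)) :=
    Complex.ofRealCLM.contDiff.comp b.contDiff
  let ψ₀ : 𝓢(EuclideanSpace ℝ (Fin n), ℂ) := hbs.toSchwartzMap hbd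
  obtain ⟨C, hC, hdecay⟩ := (𝓕 ψ₀).exists_norm_le_inv_one_add_pow m
  refine ⟨C, hC, fun v ↦ ?_⟩
  have hc : (2 : ℝ) ^ v ≠ 0 := by positivity
  have hci : ((2 : ℝ) ^ v)⁻¹ ≠ 0 := inv_ne_zero hc
  let ψ : 𝓢(EuclideanSpace ℝ (Fin n), ℂ) := compCLMOfContinuousLinearEquiv ℂ
    (ContinuousLinearEquiv.smulLeft (Units.mk0 _ hci)) ψ₀
  have hψ : ∀ ξ, ψ ξ = ψ₀ (((2 : ℝ) ^ v)⁻¹ • ξ) := fun ξ ↦ rfl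
  refine ⟨ψ, fun ξ hξ ↦ ?_, fun x ↦ ?_⟩
  · rw [hψ]
    have : b (((2 : ℝ) ^ v)⁻¹ • ξ) = 1 := by
      apply b.one_of_mem_closedBall
      rw [mem_closedBall_zero_iff, norm_smul, Real.norm_of_nonneg (by positivity),
        inv_mul_le_iff₀ (by positivity)]
      refine hξ.le.trans (le_of_eq ?_)
      change _ = (2 : ℝ) ^ v * 4
      ring
    change ((b (((2 : ℝ) ^ v)⁻¹ • ξ) : ℝ) : ℂ) = 1
    rw [this, Complex.ofReal_one]
  · have hscale : 𝓕 ψ x = ((2 : ℝ) ^ v) ^ n • 𝓕 ψ₀ ((2 : ℝ) ^ v • x) := by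
      rw [fourier_coe, fourier_coe, Real.fourier_eq, Real.fourier_eq]
      have h := Measure.integral_comp_smul (volume : Measure (EuclideanSpace ℝ (Fin n)))
        (fun ξ ↦ Real.fourierChar (-inner ℝ ξ ((2 : ℝ) ^ v • x)) • ψ₀ ξ) ((2 : ℝ) ^ v)⁻¹
      rw [finrank_euclideanSpace_fin, inv_pow, inv_inv, abs_of_pos (by positivity)] at h
      rw [← h]
      congr 1 with ξ
      rw [hψ, inner_smul_left, inner_smul_right]
      simp [hc]
    rw [hscale, etaKernel, ← ofReal_norm, norm_smul, Real.norm_of_nonneg (by positivity),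
      ← ENNReal.ofReal_mul hC.le]
    apply ENNReal.ofReal_le_ofReal
    have := hdecay ((2 : ℝ) ^ v • x)
    rw [norm_smul, Real.norm_of_nonneg (by positivity)] at this
    calc _ ≤ ((2 : ℝ) ^ v) ^ n * (C * ((1 + 2 ^ v * ‖x‖) ^ m)⁻¹) := by gcongr
      _ = _ := by rw [pow_mul]; ring

variable {n : ℕ} {f : EuclideanSpace ℝ (Fin n) → ℂ}

lemma integrable_mul_schwartzMap
    (hf : Integrable (fun x ↦ ‖f x‖ * ((1 + ‖x‖) ^ (n + 1))⁻¹)) (hfm : Measurable f)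
    (θ : 𝓢(EuclideanSpace ℝ (Fin n), ℂ)) : Integrable (fun x ↦ f x * θ x) := by
  obtain ⟨C, hC, h⟩ := θ.exists_norm_le_inv_one_add_pow (n + 1)
  refine (hf.const_mul C).mono' (by have := θ.continuous; fun_prop) (.of_forall fun x ↦ ?_)
  rw [norm_mul]
  calc _ ≤ ‖f x‖ * (C * ((1 + ‖x‖) ^ (n + 1))⁻¹) := by gcongr; exact h x
    _ = _ := by ring

/-- Band-limited functions are reproduced by convolution with the Fourier transform of a
frequency cut-off. -/
lemma ae_eq_integral_mul_fourier_of_bandlimited {R R' : ℝ} (hR : R < R')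
    (hf : Integrable (fun x ↦ ‖f x‖ * ((1 + ‖x‖) ^ (n + 1))⁻¹)) (hfm : Measurable f)
    (hband : ∀ φ : 𝓢(EuclideanSpace ℝ (Fin n), ℂ),
        (∀ ξ ∈ tsupport ⇑φ, R < ‖ξ‖) → ∫ x, f x * 𝓕 φ x = 0)
    {ψ : 𝓢(EuclideanSpace ℝ (Fin n), ℂ)} (hψ : ∀ ξ, ‖ξ‖ < R' → ψ ξ = 1) :
    ∀ᵐ z, f z = ∫ x, f x * 𝓕 ψ (x - z) := by
  obtain ⟨C, hC, hK⟩ := (𝓕 ψ).exists_norm_le_inv_one_add_pow (n + 1)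
  have hKc : Continuous (𝓕 ψ : 𝓢(EuclideanSpace ℝ (Fin n), ℂ)) := (𝓕 ψ).continuous
  have hK2 : ∀ x z, ‖f x * 𝓕 ψ (x - z)‖ ≤
      C * (‖f x‖ * ((1 + ‖x‖) ^ (n + 1))⁻¹) * (1 + ‖z‖) ^ (n + 1) := by
    intro x z
    have h1 : 1 + ‖x‖ ≤ (1 + ‖x - z‖) * (1 + ‖z‖) := by
      have := norm_le_norm_sub_add x z
      nlinarith [norm_nonneg (x - z), norm_nonneg z]
    have h2 : ((1 + ‖x - z‖) ^ (n + 1))⁻¹ ≤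
        ((1 + ‖x‖) ^ (n + 1))⁻¹ * (1 + ‖z‖) ^ (n + 1) := by
      rw [inv_mul_eq_div, inv_eq_one_div, div_le_div_iff₀ (by positivity) (by positivity),
        ← mul_pow, one_mul, mul_comm (1 + ‖z‖)]
      gcongr
    rw [norm_mul]
    calc _ ≤ ‖f x‖ * (C * (((1 + ‖x‖) ^ (n + 1))⁻¹ * (1 + ‖z‖) ^ (n + 1))) := by
          gcongr
          exact (hK _).trans (by gcongr)
      _ = _ := by ring
  have hmeas : Measurable (fun q : EuclideanSpace ℝ (Fin n) × EuclideanSpace ℝ (Fin n) ↦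
      f q.1 * 𝓕 ψ (q.1 - q.2)) := by
    have := hKc.measurable
    fun_prop
  set q : EuclideanSpace ℝ (Fin n) → ℂ := fun z ↦ ∫ x, f x * 𝓕 ψ (x - z) with hq
  have hqm : AEStronglyMeasurable q :=
    (hmeas.stronglyMeasurable.integral_prod_left' (μ := volume)).aestronglyMeasurable
  have hfl : LocallyIntegrable f := by
    have h1 : LocallyIntegrable (fun x ↦ ‖f x‖ * ((1 + ‖x‖) ^ (n + 1))⁻¹) := hf.locallyIntegrable
    have h2 := h1.mul_continuous (g := fun x : EuclideanSpace ℝ (Fin n) ↦ (1 + ‖x‖) ^ (n + 1))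
      (by fun_prop)
    refine h2.mono hfm.aestronglyMeasurable (.of_forall fun x ↦ ?_)
    simp only [norm_mul, norm_norm]
    rw [Real.norm_of_nonneg (by positivity), Real.norm_of_nonneg (by positivity),
      inv_mul_cancel_right₀ (by positivity)]
  have hql : LocallyIntegrable q := by
    have h2 : LocallyIntegrable (fun z : EuclideanSpace ℝ (Fin n) ↦
        (∫ x, C * (‖f x‖ * ((1 + ‖x‖) ^ (n + 1))⁻¹)) * (1 + ‖z‖) ^ (n + 1)) :=
      (by fun_prop : Continuous _).locallyIntegrable
    refine h2.mono hqm (.of_forall fun z ↦ ?_)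
    refine le_trans ?_ (Real.le_norm_self _)
    rw [← integral_mul_const]
    exact norm_integral_le_of_norm_le ((hf.const_mul C).mul_const _) (.of_forall fun x ↦ hK2 x z)
  refine ae_eq_of_integral_contDiff_smul_eq hfl hql fun g hg hgs ↦ ?_
  have hgs' : HasCompactSupport (fun x ↦ (g x : ℂ)) :=
    hgs.comp_left (g := fun t : ℝ ↦ (t : ℂ)) (by simp)
  let θ : 𝓢(EuclideanSpace ℝ (Fin n), ℂ) :=
    hgs'.toSchwartzMap (Complex.ofRealCLM.contDiff.comp hg)
  have hθ : ∀ x, θ x = g x := fun x ↦ rfl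
  let φ : 𝓢(EuclideanSpace ℝ (Fin n), ℂ) := 𝓕⁻ θ
  have hφ : 𝓕 φ = θ := by simp [φ]
  have hzero := hband (φ - smulLeftCLM ℂ ψ φ) (by
    intro ξ hξ
    refine hR.trans_le ?_
    by_contra! hlt
    refine notMem_tsupport_iff_eventuallyEq.2 ?_ hξ
    filter_upwards [(isOpen_lt continuous_norm continuous_const).mem_nhds hlt] with η hη
    have : ψ η = 1 := hψ η hη
    simp [smulLeftCLM_apply_apply ψ.hasTemperateGrowth, this])
  have hFsub : ∀ x, 𝓕 (φ - smulLeftCLM ℂ ψ φ) x = θ x - 𝓕 (smulLeftCLM ℂ ψ φ) x := by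
    intro x
    rw [← hφ]
    exact congrArg (· x) ((fourierTransformCLM ℂ).map_sub φ (smulLeftCLM ℂ ψ φ))
  simp only [hFsub, mul_sub] at hzero
  rw [integral_sub (integrable_mul_schwartzMap hf hfm _) (integrable_mul_schwartzMap hf hfm _),
    sub_eq_zero] at hzero
  have hθint : Integrable (fun z ↦ ‖θ z‖ * (1 + ‖z‖) ^ (n + 1)) := by
    refine Continuous.integrable_of_hasCompactSupport (by have := θ.continuous; fun_prop) ?_
    exact (HasCompactSupport.norm (f := θ) hgs').mul_right
  have hprod : Integrable (fun q : EuclideanSpace ℝ (Fin n) × EuclideanSpace ℝ (Fin n) ↦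
      θ q.2 * (f q.1 * 𝓕 ψ (q.1 - q.2))) (volume.prod volume) := by
    refine ((hf.const_mul C).mul_prod hθint).mono' ?_ (.of_forall fun q ↦ ?_)
    · have := θ.continuous.measurable
      exact ((by fun_prop : Measurable fun q : EuclideanSpace ℝ (Fin n) ×
        EuclideanSpace ℝ (Fin n) ↦ θ q.2).mul hmeas).aestronglyMeasurable
    · rw [norm_mul]
      calc _ ≤ ‖θ q.2‖ * (C * (‖f q.1‖ * ((1 + ‖q.1‖) ^ (n + 1))⁻¹) * (1 + ‖q.2‖) ^ (n + 1)) := by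
            gcongr
            exact hK2 q.1 q.2
        _ = _ := by ring
  calc ∫ x, g x • f x = ∫ x, f x * θ x := by
        congr 1 with x
        rw [hθ, Complex.real_smul, mul_comm]
    _ = ∫ x, f x * 𝓕 (smulLeftCLM ℂ ψ φ) x := hzero
    _ = ∫ x, ∫ z, θ z * (f x * 𝓕 ψ (x - z)) := by
        congr 1 with x
        rw [fourier_smulLeftCLM_apply, hφ, ← integral_const_mul]
        congr 1 with z
        ring
    _ = ∫ z, ∫ x, θ z * (f x * 𝓕 ψ (x - z)) := integral_integral_swap hprod
    _ = ∫ z, g z • q z := by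
        congr 1 with z
        rw [integral_const_mul, hθ, Complex.real_smul]

end Reproducing

section Convolution

variable {n : ℕ} {p : EuclideanSpace ℝ (Fin n) → ℝ} {f g h : EuclideanSpace ℝ (Fin n) → ℂ}

lemma luxNorm_le_mul_of_modular {G D : ℝ≥0∞} (hp : ∀ x, 1 ≤ p x) (hf : luxNorm p f < ⊤)
    (hG : G ≠ ⊤) (hD1 : 1 ≤ D) (hD : D ≠ ⊤)
    (hF : ∀ μ : ℝ≥0∞, 0 < μ → μ ≠ ⊤ → ∫⁻ x, (‖f x‖ₑ / μ) ^ p x ≤ 1 →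
      ∃ F : EuclideanSpace ℝ (Fin n) → ℝ≥0∞, (∀ x, ‖h x‖ₑ ≤ G * (F x * μ)) ∧
        ∫⁻ x, F x ^ p x ≤ D) :
    luxNorm p h ≤ G * D * luxNorm p f := by
  have hD0 : D ≠ 0 := (zero_lt_one.trans_le hD1).ne'
  rcases eq_or_ne G 0 with rfl | hG0
  · obtain ⟨μ, ⟨hμ, hμ1⟩, hμt⟩ := sInf_lt_iff.1 hf
    obtain ⟨F, hF, -⟩ := hF μ hμ hμt.ne hμ1
    have hh : ∀ x, ‖h x‖₊ = 0 := fun x ↦ by simpa using hF x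
    rw [zero_mul, zero_mul]
    refine le_of_forall_gt_imp_ge_of_dense fun ε hε ↦ sInf_le ⟨hε, ?_⟩
    have hp0 : ∀ x, 0 < p x := fun x ↦ by linarith [hp x]
    simp [hh, hp0]
  have hc0 : G * D ≠ 0 := mul_ne_zero hG0 hD0
  have hct : G * D ≠ ⊤ := ENNReal.mul_ne_top hG hD
  rw [mul_comm, ← ENNReal.div_le_iff hc0 hct]
  refine le_sInf fun μ ⟨hμ, hμ1⟩ ↦ ?_
  rcases eq_or_ne μ ⊤ with rfl | hμt
  · exact le_top
  rw [ENNReal.div_le_iff hc0 hct]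
  obtain ⟨F, hF, hFD⟩ := hF μ hμ hμt hμ1
  refine sInf_le ⟨ENNReal.mul_pos hμ.ne' hc0, ?_⟩
  have hpt : ∀ x, ((‖h x‖₊ : ℝ≥0∞) / (μ * (G * D))) ^ p x ≤ D⁻¹ * F x ^ p x := by
    intro x
    have hpx := hp x
    calc _ ≤ (F x / D) ^ p x := by
          refine ENNReal.rpow_le_rpow ?_ (by linarith)
          refine ENNReal.div_le_of_le_mul ((hF x).trans (le_of_eq ?_))
          rw [mul_comm μ, mul_assoc G, ← mul_assoc, mul_comm (F x / D), mul_assoc G,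
            mul_assoc G, mul_right_comm, ENNReal.mul_div_cancel hD0 hD]
      _ = (D ^ p x)⁻¹ * F x ^ p x := by
          rw [ENNReal.div_rpow_of_nonneg _ _ (by linarith), mul_comm, div_eq_mul_inv]
      _ ≤ _ := by
          gcongr
          exact ENNReal.le_rpow_self_of_one_le hD1 hpx
  calc _ ≤ ∫⁻ x, D⁻¹ * F x ^ p x := lintegral_mono hpt
    _ = D⁻¹ * ∫⁻ x, F x ^ p x := lintegral_const_mul' _ _ (ENNReal.inv_ne_top.2 hD0)
    _ ≤ D⁻¹ * D := by gcongr
    _ = 1 := ENNReal.inv_mul_cancel hD0 hD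

/-- Functions in `L^{p(·)}` have polynomial growth on average. -/
lemma integrable_norm_mul_inv_of_luxNorm_lt_top (hp : ∀ x, 1 ≤ p x) (hpm : Measurable p)
    (hfm : Measurable f) (hf : luxNorm p f < ⊤) :
    Integrable (fun x ↦ ‖f x‖ * ((1 + ‖x‖) ^ (n + 1))⁻¹) := by
  obtain ⟨μ, ⟨hμ, hμ1⟩, hμt⟩ := sInf_lt_iff.1 hf
  refine ⟨by fun_prop, ?_⟩
  rw [hasFiniteIntegral_iff_enorm]
  have hpt : ∀ x, ‖‖f x‖ * ((1 + ‖x‖) ^ (n + 1))⁻¹‖ₑ ≤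
      μ * (ENNReal.ofReal (((1 + ‖x‖) ^ (n + 1))⁻¹) + (‖f x‖ₑ / μ) ^ p x) := by
    intro x
    have hw : ENNReal.ofReal (((1 + ‖x‖) ^ (n + 1))⁻¹) ≤ 1 := by
      rw [ENNReal.ofReal_le_one]
      exact inv_le_one_of_one_le₀ (one_le_pow₀ (by linarith [norm_nonneg x]))
    rw [enorm_mul, enorm_norm, Real.enorm_of_nonneg (by positivity)]
    nth_rewrite 1 [← ENNReal.mul_div_cancel (b := ‖f x‖ₑ) hμ.ne' hμt.ne]
    rw [mul_assoc]
    gcongr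
    rcases le_total (‖f x‖ₑ / μ) 1 with h1 | h1
    · exact le_add_right (mul_le_of_le_one_left' h1)
    · exact le_add_left ((mul_le_of_le_one_right' hw).trans
        (ENNReal.le_rpow_self_of_one_le h1 (hp x)))
  refine (lintegral_mono hpt).trans_lt ?_
  rw [lintegral_const_mul _ (by fun_prop), lintegral_add_left (by fun_prop)]
  exact ENNReal.mul_lt_top hμt (ENNReal.add_lt_top.2
    ⟨etaMass_lt_top n, hμ1.trans_lt ENNReal.one_lt_top⟩)

lemma etaKernel_sub_sub_le {v m : ℕ} (w x y : EuclideanSpace ℝ (Fin n)) :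
    etaKernel n v m (w - (x - y)) ≤
      ENNReal.ofReal ((1 + 2 ^ v * ‖y‖) ^ m) * etaKernel n v m (x - w) := by
  unfold etaKernel
  rw [← ENNReal.ofReal_mul (by positivity)]
  apply ENNReal.ofReal_le_ofReal
  have h1 : 1 + 2 ^ v * ‖x - w‖ ≤ (1 + 2 ^ v * ‖y‖) * (1 + 2 ^ v * ‖w - (x - y)‖) := by
    have h : ‖x - w‖ ≤ ‖y‖ + ‖w - (x - y)‖ := by
      have := norm_sub_le y (w - (x - y))
      rwa [show y - (w - (x - y)) = x - w by abel] at this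
    have h2 : (2 : ℝ) ^ v * ‖x - w‖ ≤ 2 ^ v * (‖y‖ + ‖w - (x - y)‖) := by gcongr
    have h3 : 0 ≤ (2 : ℝ) ^ v * ‖y‖ * (2 ^ v * ‖w - (x - y)‖) := by positivity
    nlinarith
  have h2 : ((1 + 2 ^ v * ‖w - (x - y)‖) ^ m)⁻¹ ≤
      (1 + 2 ^ v * ‖y‖) ^ m * ((1 + 2 ^ v * ‖x - w‖) ^ m)⁻¹ := by
    rw [← div_eq_mul_inv, inv_eq_one_div, div_le_div_iff₀ (by positivity) (by positivity),
      ← mul_pow, one_mul]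
    gcongr
  calc _ ≤ 2 ^ (v * n) * ((1 + 2 ^ v * ‖y‖) ^ m * ((1 + 2 ^ v * ‖x - w‖) ^ m)⁻¹) := by gcongr
    _ = _ := by ring

lemma enorm_convolution_le_of_le_etaKernel {v m : ℕ} {C : ℝ≥0∞} (hfm : Measurable f)
    (hgm : Measurable g)
    (hrep : ∀ᵐ z, ‖f z‖ₑ ≤ ∫⁻ w, ‖f w‖ₑ * (C * etaKernel n v m (w - z)))
    (x : EuclideanSpace ℝ (Fin n)) :
    ‖∫ y, f (x - y) * g y‖ₑ ≤ C * (∫⁻ y, ENNReal.ofReal ((1 + 2 ^ v * ‖y‖) ^ m) * ‖g y‖ₑ) *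
      ∫⁻ w, ‖f w‖ₑ * etaKernel n v m (x - w) := by
  have hae := (quasiMeasurePreserving_sub_left volume x).ae hrep
  calc _ ≤ ∫⁻ y, ‖f (x - y) * g y‖ₑ := enorm_integral_le_lintegral_enorm _
    _ ≤ ∫⁻ y, (C * ∫⁻ w, ‖f w‖ₑ * etaKernel n v m (x - w)) *
        (ENNReal.ofReal ((1 + 2 ^ v * ‖y‖) ^ m) * ‖g y‖ₑ) := by
      refine lintegral_mono_ae (hae.mono fun y hy ↦ ?_)
      rw [enorm_mul, ← mul_assoc]
      gcongr
      refine hy.trans ?_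
      rw [← lintegral_const_mul _ (by fun_prop), ← lintegral_mul_const _ (by fun_prop)]
      refine lintegral_mono fun w ↦ ?_
      calc _ ≤ ‖f w‖ₑ * (C * (ENNReal.ofReal ((1 + 2 ^ v * ‖y‖) ^ m) *
            etaKernel n v m (x - w))) := by
            gcongr
            exact etaKernel_sub_sub_le w x y
        _ = _ := by ring
    _ = _ := by
      rw [lintegral_const_mul _ (by fun_prop)]
      ring

lemma exists_one_add_pow_le_exp_mul {c : ℝ} (hc : 0 < c) (m : ℕ) :
    ∃ C : ℝ, 0 < C ∧ ∀ u : ℝ, 0 ≤ u → (1 + u) ^ m ≤ C * Real.exp (c * u) := by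
  refine ⟨m.factorial / c ^ m * Real.exp c, by positivity, fun u hu ↦ ?_⟩
  have h := Real.pow_div_factorial_le_exp (c * (1 + u)) (by positivity) m
  rw [div_le_iff₀ (by positivity), mul_pow, mul_add, mul_one, Real.exp_add] at h
  rw [mul_assoc, div_mul_eq_mul_div, le_div_iff₀ (by positivity)]
  linarith

lemma lintegral_one_add_pow_mul_enorm_le {v m : ℕ} {c C : ℝ} (hc : 0 ≤ c) (hC : 0 ≤ C)
    (hexp : ∀ u : ℝ, 0 ≤ u → (1 + u) ^ m ≤ C * Real.exp (c * u))
    (hint : Integrable (fun x : EuclideanSpace ℝ (Fin n) ↦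
      Real.exp ((2 + 2 ^ (v * n) * ‖x‖) * c) * ‖g x‖)) :
    ∫⁻ y, ENNReal.ofReal ((1 + 2 ^ v * ‖y‖) ^ m) * ‖g y‖ₑ ≤
      ENNReal.ofReal (C * ∫ x, Real.exp ((2 + 2 ^ (v * n) * ‖x‖) * c) * ‖g x‖) := by
  rw [← integral_const_mul, ofReal_integral_eq_lintegral_ofReal (hint.const_mul C)
    (.of_forall fun x ↦ by positivity)]
  refine lintegral_mono fun y ↦ ?_
  rw [← ofReal_norm, ← ENNReal.ofReal_mul (by positivity)]
  apply ENNReal.ofReal_le_ofReal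
  rw [← mul_assoc]
  gcongr
  refine (hexp _ (by positivity)).trans ?_
  have h1 : (2 : ℝ) ^ v * ‖y‖ ≤ 2 ^ (v * n) * ‖y‖ := by
    rcases n.eq_zero_or_pos with rfl | hn
    · simp [Subsingleton.elim y 0]
    · gcongr
      · norm_num
      · exact Nat.le_mul_of_pos_right v hn
  gcongr C * Real.exp ?_
  rw [mul_comm]
  gcongr
  linarith

lemma abs_sub_le_sq_mul_abs_one_div_sub {a b B : ℝ} (ha : 1 ≤ a) (hb : 1 ≤ b) (haB : a ≤ B)
    (hbB : b ≤ B) : |a - b| ≤ B ^ 2 * |1 / a - 1 / b| := by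
  have hB : 0 ≤ B := by linarith
  have h : a - b = -(a * b * (1 / a - 1 / b)) := by
    field_simp
    ring
  rw [h, abs_neg, abs_mul, abs_of_pos (by positivity), sq]
  gcongr

/-- Young's inequality in modular form, for a constant exponent. -/
lemma lintegral_rpow_lintegral_sub_mul_le {φ K : EuclideanSpace ℝ (Fin n) → ℝ≥0∞} {q : ℝ}
    (hq : 1 ≤ q) (hφ : Measurable φ) (hK : Measurable K) (hKt : ∫⁻ y, K y ≠ ⊤)
    (hmod : ∫⁻ y, φ y ^ q ≤ 1) :
    ∫⁻ x, ((∫⁻ y, φ (x - y) * K y) / ∫⁻ y, K y) ^ q ≤ 1 := by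
  set G := ∫⁻ y, K y with hG
  have hq0 : 0 < q := by linarith
  rcases eq_or_ne G 0 with h0 | h0
  · have hK0 : K =ᵐ[volume] 0 := (lintegral_eq_zero_iff hK).1 h0
    have : ∀ x, ∫⁻ y, φ (x - y) * K y = 0 := fun x ↦ by
      rw [lintegral_eq_zero_iff (by fun_prop)]
      exact hK0.mono fun y hy ↦ by simp [hy]
    simp [this, hq0]
  calc _ ≤ ∫⁻ x, G⁻¹ * ∫⁻ y, φ (x - y) ^ q * K y := by
        refine lintegral_mono fun x ↦ ?_
        rw [ENNReal.div_rpow_of_nonneg _ _ hq0.le]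
        refine ENNReal.div_le_of_le_mul ((rpow_lintegral_mul_le (by fun_prop) hK hq).trans
          (le_of_eq ?_))
        rw [← hG, ENNReal.rpow_sub _ _ h0 hKt, ENNReal.rpow_one, div_eq_mul_inv]
        ring
    _ = G⁻¹ * ∫⁻ y, ∫⁻ x, φ (x - y) ^ q * K y := by
        rw [lintegral_const_mul _ (by fun_prop), lintegral_lintegral_swap (by fun_prop)]
    _ = G⁻¹ * ((∫⁻ x, φ x ^ q) * G) := by
        congr 1
        rw [hG, ← lintegral_const_mul _ hK]
        congr 1 with y
        rw [lintegral_mul_const _ (by fun_prop),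
          lintegral_sub_right_eq_self (fun x ↦ φ x ^ q) y]
    _ ≤ G⁻¹ * (1 * G) := by gcongr
    _ = 1 := by rw [one_mul, ENNReal.inv_mul_cancel h0 hKt]

lemma luxNorm_convolution_le_of_const {q : ℝ} (hq : 1 ≤ q) (hp : ∀ x, p x = q)
    (hfm : Measurable f) (hf : luxNorm p f < ⊤) (hgm : Measurable g) (hg : Integrable g) :
    luxNorm p (fun x ↦ ∫ y, f (x - y) * g y) ≤ (∫⁻ y, ‖g y‖ₑ) * luxNorm p f := by
  have hgt : ∫⁻ y, ‖g y‖ₑ ≠ ⊤ := hg.2.ne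
  have := luxNorm_le_mul_of_modular (h := fun x ↦ ∫ y, f (x - y) * g y) (p := p)
    (fun x ↦ (hp x).symm ▸ hq) hf hgt le_rfl one_ne_top ?_
  · rwa [mul_one] at this
  intro μ hμ hμt hmod
  simp only [hp] at hmod ⊢
  refine ⟨_, fun x ↦ ?_, lintegral_rpow_lintegral_sub_mul_le (φ := fun y ↦ ‖f y‖ₑ / μ) hq
    (by fun_prop) hgm.enorm hgt hmod⟩
  have hfμ : ∀ z, ‖f z‖ₑ / μ * μ = ‖f z‖ₑ := fun z ↦ ENNReal.div_mul_cancel hμ.ne' hμt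
  rw [← mul_assoc, ENNReal.mul_div_cancel', ← lintegral_mul_const _ (by fun_prop)]
  · refine (enorm_integral_le_lintegral_enorm _).trans (lintegral_mono fun y ↦ ?_)
    rw [enorm_mul, mul_right_comm, hfμ]
  · intro h0
    have hK0 := (lintegral_eq_zero_iff hgm.enorm).1 h0
    rw [lintegral_eq_zero_iff (by fun_prop)]
    exact hK0.mono fun y hy ↦ by simp_all
  · exact fun h ↦ absurd h hgt

lemma luxNorm_convolution_le_of_ae_le {v m : ℕ} {C D W : ℝ≥0∞} (hp : ∀ x, 1 ≤ p x)
    (hfm : Measurable f) (hf : luxNorm p f < ⊤) (hgm : Measurable g)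
    (hC : C ≠ ⊤) (hW : W ≠ ⊤) (hD1 : 1 ≤ D) (hD : D ≠ ⊤)
    (hmax : ∀ a : EuclideanSpace ℝ (Fin n) → ℝ, Measurable a → (∀ y, 0 ≤ a y) →
      ∫⁻ y, ENNReal.ofReal (a y ^ p y) ≤ 1 →
      ∫⁻ x, (∫⁻ y, ENNReal.ofReal (a y) * etaKernel n v m (x - y)) ^ p x ≤ D)
    (hrep : ∀ᵐ z, ‖f z‖ₑ ≤ ∫⁻ w, ‖f w‖ₑ * (C * etaKernel n v m (w - z)))
    (hgW : ∫⁻ y, ENNReal.ofReal ((1 + 2 ^ v * ‖y‖) ^ m) * ‖g y‖ₑ ≤ W) :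
    luxNorm p (fun x ↦ ∫ y, f (x - y) * g y) ≤ C * W * D * luxNorm p f := by
  refine luxNorm_le_mul_of_modular hp hf (ENNReal.mul_ne_top hC hW) hD1 hD
    fun μ hμ hμt hmod ↦ ?_
  have hμr : 0 < μ.toReal := ENNReal.toReal_pos hμ.ne' hμt
  have ha : ∀ y, ENNReal.ofReal (‖f y‖ / μ.toReal) = ‖f y‖ₑ / μ := fun y ↦ by
    rw [ENNReal.ofReal_div_of_pos hμr, ofReal_norm, ENNReal.ofReal_toReal hμt]
  refine ⟨_, fun x ↦ ?_, hmax (fun y ↦ ‖f y‖ / μ.toReal) (by fun_prop)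
    (fun y ↦ by positivity) ?_⟩
  · refine (enorm_convolution_le_of_le_etaKernel hfm hgm hrep x).trans ?_
    simp only [ha]
    rw [← lintegral_mul_const _ (by fun_prop)]
    refine mul_le_mul (by gcongr) (lintegral_mono fun y ↦ le_of_eq ?_) zero_le zero_le
    rw [mul_right_comm, ENNReal.div_mul_cancel hμ.ne' hμt]
  · refine le_trans (le_of_eq ?_) hmod
    congr 1 with y
    rw [← ENNReal.ofReal_rpow_of_nonneg (by positivity) (by linarith [hp y]), ha]

/-- The modular maximal-type bound under log-Hölder continuity and decay of the exponent. -/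
lemma exists_lintegral_rpow_lintegral_etaKernel_le_of_logHolder {cLog cLogP pp pInf : ℝ}
    (hpm : Measurable p) (hbounds : ∀ x, 1 ≤ p x ∧ p x ≤ pp)
    (hdecay : ∀ x, |1 / p x - 1 / pInf| ≤ cLog / Real.log (Real.exp 1 + ‖x‖))
    (hlogp : ∀ x y, |p x - p y| ≤ cLogP / Real.log (Real.exp 1 + 1 / ‖x - y‖)) :
    ∃ (m : ℕ) (D : ℝ≥0∞), 1 ≤ D ∧ D ≠ ⊤ ∧ ∀ (v : ℕ) (a : EuclideanSpace ℝ (Fin n) → ℝ),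
      Measurable a → (∀ y, 0 ≤ a y) → ∫⁻ y, ENNReal.ofReal (a y ^ p y) ≤ 1 →
      ∫⁻ x, (∫⁻ y, ENNReal.ofReal (a y) * etaKernel n v m (x - y)) ^ p x ≤ D := by
  have hcLog : 0 ≤ cLog := by
    have := (abs_nonneg _).trans (hdecay 0)
    simpa using this
  set A := pp ^ 2 * cLog with hA
  have hA0 : 0 ≤ A := by positivity
  have hinf : ∀ x y, |p x - p y| ≤
      A / Real.log (Real.exp 1 + ‖x‖) + A / Real.log (Real.exp 1 + ‖y‖) := fun x y ↦ by
    refine (abs_sub_le_sq_mul_abs_one_div_sub (hbounds x).1 (hbounds y).1 (hbounds x).2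
      (hbounds y).2).trans ?_
    rw [hA, mul_div_assoc, mul_div_assoc, ← mul_add]
    gcongr
    have h1 := hdecay y
    rw [abs_sub_comm] at h1
    exact (abs_sub_le _ (1 / pInf) _).trans (add_le_add (hdecay x) h1)
  obtain ⟨M, hM⟩ := exists_nat_ge (max (n * cLogP) (A * (n + 1)))
  set C := max (Real.exp M) (Real.exp (2 * A) ^ (n + 1)) with hCdef
  have hC1 : 1 ≤ C := le_max_of_le_left (Real.one_le_exp (by positivity))
  obtain ⟨D, hD1, hD, h⟩ := exists_lintegral_rpow_lintegral_etaKernel_le (M := M) hpm hbounds hC1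
    (fun v x y ↦ (two_pow_rpow_abs_sub_le hlogp ((le_max_left _ _).trans hM) x y).trans (by
      gcongr
      exact le_max_left _ _))
    (fun x y ↦ by
      have hs : 1 ≤ 1 + ‖x - y‖ := by linarith [norm_nonneg (x - y)]
      rw [← Real.rpow_natCast, ← Real.rpow_mul (by positivity), mul_comm, Real.rpow_mul
        (by positivity), Real.rpow_natCast]
      calc _ ≤ (Real.exp (2 * A) * (1 + ‖x - y‖) ^ A) ^ (n + 1) := by
            gcongr
            exact exp_add_norm_rpow_abs_sub_le hA0 hinf x y
        _ = Real.exp (2 * A) ^ (n + 1) * (1 + ‖x - y‖) ^ (A * (n + 1)) := by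
            rw [mul_pow, Real.rpow_mul (y := A) (by positivity), ← Nat.cast_succ,
              Real.rpow_natCast]
        _ ≤ C * (1 + ‖x - y‖) ^ (M : ℝ) := by
            gcongr
            · exact le_max_right _ _
            · exact (le_max_right _ _).trans hM
        _ = _ := by rw [Real.rpow_natCast])
  exact ⟨_, D, hD1, hD, h⟩

end Convolution

/-- Weighted convolution estimate: for band-limited `f ∈ L^{p(·)}` and `g` with finite
weighted `L¹` norm `‖exp((2 + 2^{vn}|·|) c_log(p)) g‖₁`, one has
`‖f * g‖_{p(·)} ≤ c ‖exp((2 + 2^{vn}|·|) c_log(p)) g‖₁ ‖f‖_{p(·)}`, `c` independent of `v`. -/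
theorem convolution_bounded_bandlimited (n : ℕ) (p : EuclideanSpace ℝ (Fin n) → ℝ)
    (cLog cLogP pm pp pInf : ℝ) (hpmeas : Measurable p)
    (hpm : 1 < pm) (hbounds : ∀ x, pm ≤ p x ∧ p x ≤ pp)
    (hlog : ∀ x y, |1 / p x - 1 / p y| ≤ cLog / Real.log (Real.exp 1 + 1 / ‖x - y‖))
    (hdecay : ∀ x, |1 / p x - 1 / pInf| ≤ cLog / Real.log (Real.exp 1 + ‖x‖))
    (hlogp : ∀ x y, |p x - p y| ≤ cLogP / Real.log (Real.exp 1 + 1 / ‖x - y‖)) :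
    ∃ c > 0, ∀ (v : ℕ) (f g : EuclideanSpace ℝ (Fin n) → ℂ),
      Measurable f → luxNorm p f < ⊤ →
      (∀ φ : 𝓢(EuclideanSpace ℝ (Fin n), ℂ),
        (∀ ξ ∈ tsupport ⇑φ, (2 : ℝ) ^ (v + 1) < ‖ξ‖) →
        ∫ x, f x * fourierTransformCLM ℂ φ x = 0) →
      Measurable g →
      Integrable (fun x => Real.exp ((2 + 2 ^ (v * n) * ‖x‖) * cLogP) * ‖g x‖) →
      luxNorm p (fun x => ∫ y, f (x - y) * g y) ≤
        ENNReal.ofReal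
            (c * ∫ x, Real.exp ((2 + 2 ^ (v * n) * ‖x‖) * cLogP) * ‖g x‖) *
          luxNorm p f := by
  have hp1 : ∀ x, 1 ≤ p x := fun x ↦ hpm.le.trans (hbounds x).1
  have hc0 : 0 ≤ cLogP := by simpa using hlogp 0 0
  rcases hc0.eq_or_lt with rfl | hc0
  · have hconst : ∀ x, p x = p 0 := fun x ↦ by
      simpa [sub_eq_zero] using hlogp x 0
    refine ⟨1, one_pos, fun v f g hfm hf _ hgm hint ↦ ?_⟩
    simp only [mul_zero, Real.exp_zero, one_mul] at hint ⊢
    rw [ofReal_integral_norm_eq_lintegral_enorm ((integrable_norm_iff (by fun_prop)).1 hint)]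
    exact luxNorm_convolution_le_of_const (hp1 0) hconst hfm hf hgm
      ((integrable_norm_iff (by fun_prop)).1 hint)
  obtain ⟨m, D, hD1, hD, hmax⟩ := exists_lintegral_rpow_lintegral_etaKernel_le_of_logHolder
    hpmeas (fun x ↦ ⟨hp1 x, (hbounds x).2⟩) hdecay hlogp
  obtain ⟨C₀, hC₀, hcut⟩ := exists_cutoff_fourier_le n m
  obtain ⟨C₁, hC₁, hexp⟩ := exists_one_add_pow_le_exp_mul hc0 m
  have hDr : 0 < D.toReal := ENNReal.toReal_pos (zero_lt_one.trans_le hD1).ne' hD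
  refine ⟨C₀ * C₁ * D.toReal, by positivity, fun v f g hfm hf hband hgm hint ↦ ?_⟩
  obtain ⟨ψ, hψ, hψK⟩ := hcut v
  have hrep := ae_eq_integral_mul_fourier_of_bandlimited
    (pow_lt_pow_right₀ one_lt_two (by omega) : (2 : ℝ) ^ (v + 1) < 2 ^ (v + 2))
    (integrable_norm_mul_inv_of_luxNorm_lt_top hp1 hpmeas hfm hf) hfm hband hψ
  refine (luxNorm_convolution_le_of_ae_le (C := ENNReal.ofReal C₀) hp1 hfm hf hgm ENNReal.ofReal_ne_top
    ENNReal.ofReal_ne_top hD1 hD (hmax v) (hrep.mono fun z hz ↦ ?_)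
    (lintegral_one_add_pow_mul_enorm_le hc0.le hC₁.le hexp hint)).trans (le_of_eq ?_)
  · rw [hz]
    refine (enorm_integral_le_lintegral_enorm _).trans (lintegral_mono fun w ↦ ?_)
    rw [enorm_mul]
    gcongr
    exact hψK _
  · have hI : 0 ≤ ∫ x, Real.exp ((2 + 2 ^ (v * n) * ‖x‖) * cLogP) * ‖g x‖ :=
      integral_nonneg fun x ↦ by positivity
    rw [← ENNReal.ofReal_mul hC₀.le]
    nth_rewrite 1 [← ENNReal.ofReal_toReal hD]
    rw [← ENNReal.ofReal_mul (by positivity)]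
    congr 2
    ring
end

section
/- (r-trick) Let r > 0, v ∈ ℕ₀, and m > n. There exists c = c(r, m, n) > 0 such that for all g ∈ S'(ℝ^n) with supp 𝓕g ⊂ {ξ ∈ ℝ^n : |ξ| ≤ 2^{v+1}}, one has |g(x)| ≤ c (η_{v,m} * |g|^r (x))^{1/r} for all x ∈ ℝ^n. -/
open MeasureTheory ENNReal SchwartzMap

section Growth

variable {V : Type*} [NormedAddCommGroup V]

theorem one_add_norm_le_mul (y z : V) : 1 + ‖y‖ ≤ (1 + ‖y - z‖) * (1 + ‖z‖) := by
  have := norm_sub_norm_le y z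
  nlinarith [norm_nonneg (y - z), norm_nonneg z]

theorem norm_le_of_growth {g : V → ℂ} {C : ℝ} {k : ℕ}
    (hgC : ∀ x, ‖g x‖ ≤ C * (1 + ‖x‖) ^ k) (y z : V) :
    ‖g y‖ ≤ C * (1 + ‖y - z‖) ^ k * (1 + ‖z‖) ^ k := by
  have hC : 0 ≤ C := by simpa using (norm_nonneg _).trans (hgC 0)
  calc ‖g y‖ ≤ C * (1 + ‖y‖) ^ k := hgC y
    _ ≤ C * ((1 + ‖y - z‖) * (1 + ‖z‖)) ^ k := by gcongr; exact one_add_norm_le_mul y z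
    _ = _ := by rw [mul_pow]; ring

theorem SchwartzMap.exists_one_add_norm_pow_mul_le [NormedSpace ℝ V] (ψ : 𝓢(V, ℂ)) (N : ℕ) :
    ∃ C : ℝ, 0 < C ∧ ∀ x, (1 + ‖x‖) ^ N * ‖ψ x‖ ≤ C := by
  refine ⟨max 1 (2 ^ N * (Finset.Iic (N, 0)).sup (fun m => SchwartzMap.seminorm ℝ m.1 m.2) ψ),
    by positivity, fun x => le_max_of_le_right ?_⟩
  simpa using SchwartzMap.one_add_le_sup_seminorm_apply (𝕜 := ℝ) (m := (N, 0)) (k := N) (n := 0)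
    le_rfl le_rfl ψ x

end Growth

section Reproducing

open scoped FourierTransform Convolution ContDiff

theorem exists_schwartz_eq_one_on_ball (V : Type*) [NormedAddCommGroup V]
    [InnerProductSpace ℝ V] [FiniteDimensional ℝ V] : ∃ χ : 𝓢(V, ℂ), ∀ ξ, ‖ξ‖ < 3 → χ ξ = 1 := by
  let b : ContDiffBump (0 : V) := ⟨3, 4, by norm_num, by norm_num⟩
  have hc : HasCompactSupport (Complex.ofRealCLM ∘ b) := b.hasCompactSupport.comp_left rfl
  have hd : ContDiff ℝ ∞ (Complex.ofRealCLM ∘ b) := Complex.ofRealCLM.contDiff.comp b.contDiff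
  refine ⟨hc.toSchwartzMap hd, fun ξ hξ => ?_⟩
  have : b ξ = 1 := b.one_of_mem_closedBall (by simpa using hξ.le)
  simp [this]

variable {V : Type*} [NormedAddCommGroup V] [InnerProductSpace ℝ V] [FiniteDimensional ℝ V]
  [MeasurableSpace V] [BorelSpace V]

theorem SchwartzMap.integrable_one_add_norm_pow_mul (ψ : 𝓢(V, ℂ)) (k : ℕ) :
    Integrable fun x => (1 + ‖x‖) ^ k * ‖ψ x‖ := by
  obtain ⟨C, -, hC⟩ := ψ.exists_one_add_norm_pow_mul_le (k + (Module.finrank ℝ V + 1))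
  have hi : Integrable (fun x : V => C * (1 + ‖x‖) ^ (-((Module.finrank ℝ V + 1 : ℕ) : ℝ))) :=
    (integrable_one_add_norm (by push_cast; linarith)).const_mul C
  refine hi.mono' (by have := ψ.continuous; fun_prop) (.of_forall fun x => ?_)
  have h1 : 0 < 1 + ‖x‖ := by positivity
  rw [Real.norm_of_nonneg (by positivity), Real.rpow_neg h1.le, Real.rpow_natCast,
    ← div_eq_mul_inv, le_div_iff₀ (by positivity)]
  calc _ = (1 + ‖x‖) ^ (k + (Module.finrank ℝ V + 1)) * ‖ψ x‖ := by ring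
    _ ≤ C := hC x

variable {g : V → ℂ} {C : ℝ} {k : ℕ}

theorem continuous_integral_mul_sub (hg : Continuous g)
    (hgC : ∀ x, ‖g x‖ ≤ C * (1 + ‖x‖) ^ k) (ψ : 𝓢(V, ℂ)) :
    Continuous fun z => ∫ y, g y * ψ (y - z) := by
  have hC : 0 ≤ C := by simpa using (norm_nonneg _).trans (hgC 0)
  have heq : (fun z => ∫ y, g y * ψ (y - z)) = fun z => ∫ t, g (t + z) * ψ t := by
    ext z
    rw [← integral_add_right_eq_self _ z]
    simp
  rw [heq, continuous_iff_continuousAt]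
  intro z₀
  refine continuousAt_of_dominated
    (bound := fun t => C * (2 + ‖z₀‖) ^ k * ((1 + ‖t‖) ^ k * ‖ψ t‖)) ?_ ?_ ?_ ?_
  · exact .of_forall fun z => by
      have := ψ.continuous
      exact Continuous.aestronglyMeasurable (by fun_prop)
  · filter_upwards [Metric.ball_mem_nhds z₀ one_pos] with z hz
    refine .of_forall fun t => ?_
    have hz' : 1 + ‖z‖ ≤ 2 + ‖z₀‖ := by
      have := norm_sub_norm_le z z₀
      rw [mem_ball_iff_norm] at hz
      linarith
    rw [norm_mul]
    have h := norm_le_of_growth hgC (t + z) z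
    rw [add_sub_cancel_right] at h
    calc ‖g (t + z)‖ * ‖ψ t‖ ≤ (C * (1 + ‖t‖) ^ k * (1 + ‖z‖) ^ k) * ‖ψ t‖ := by gcongr
      _ ≤ (C * (1 + ‖t‖) ^ k * (2 + ‖z₀‖) ^ k) * ‖ψ t‖ := by gcongr
      _ = _ := by ring
  · exact (ψ.integrable_one_add_norm_pow_mul k).const_mul _
  · exact .of_forall fun t => by fun_prop

theorem integral_mul_integral_sub_mul_swap (hg : Continuous g)
    (hgC : ∀ x, ‖g x‖ ≤ C * (1 + ‖x‖) ^ k) (ψ θ : 𝓢(V, ℂ)) :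
    ∫ y, g y * ∫ z, ψ (y - z) * θ z = ∫ z, θ z * ∫ y, g y * ψ (y - z) := by
  have hC : 0 ≤ C := by simpa using (norm_nonneg _).trans (hgC 0)
  have hψ := ψ.continuous
  have hθ := θ.continuous
  have hint : Integrable (fun p : V × V => g p.1 * (ψ (p.1 - p.2) * θ p.2))
      (volume.prod volume) := by
    have h := ((θ.integrable_one_add_norm_pow_mul k).convolution_integrand
      (ContinuousLinearMap.mul ℝ ℝ) (ψ.integrable_one_add_norm_pow_mul k)).const_mul C
    refine h.mono' (Continuous.aestronglyMeasurable (by fun_prop)) (.of_forall fun p => ?_)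
    simp only [norm_mul, ContinuousLinearMap.mul_apply']
    calc ‖g p.1‖ * (‖ψ (p.1 - p.2)‖ * ‖θ p.2‖)
        ≤ (C * (1 + ‖p.1 - p.2‖) ^ k * (1 + ‖p.2‖) ^ k) * (‖ψ (p.1 - p.2)‖ * ‖θ p.2‖) := by
          gcongr; exact norm_le_of_growth hgC _ _
      _ = _ := by ring
  simp_rw [← integral_const_mul]
  rw [integral_integral_swap hint]
  congr! 4
  ring

theorem eq_integral_mul_fourier_sub {R R' : ℝ} (hR : R < R') (hg : Continuous g)
    (hgC : ∀ x, ‖g x‖ ≤ C * (1 + ‖x‖) ^ k)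
    (hsupp : ∀ φ : 𝓢(V, ℂ), (∀ ξ ∈ tsupport ⇑φ, R < ‖ξ‖) →
      ∫ x, g x * fourierTransformCLM ℂ φ x = 0)
    (χ : 𝓢(V, ℂ)) (hχ : ∀ ξ, ‖ξ‖ < R' → χ ξ = 1) (x : V) :
    g x = ∫ y, g y * 𝓕 χ (y - x) := by
  set ψ : 𝓢(V, ℂ) := 𝓕 χ with hψ
  have hcont := continuous_integral_mul_sub hg hgC ψ
  suffices h : ∀ᵐ z, g z = ∫ y, g y * ψ (y - z) from
    congrFun ((hg.ae_eq_iff_eq volume hcont).1 h) x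
  refine ae_eq_of_integral_contDiff_smul_eq hg.locallyIntegrable hcont.locallyIntegrable ?_
  intro η hη hηc
  have hc : HasCompactSupport (Complex.ofRealCLM ∘ η) := hηc.comp_left rfl
  have hd : ContDiff ℝ ∞ (Complex.ofRealCLM ∘ η) := by fun_prop
  set θ : 𝓢(V, ℂ) := hc.toSchwartzMap hd
  have hθ : ∀ z, θ z = (η z : ℂ) := fun z => rfl
  set κ : 𝓢(V, ℂ) := convolution (ContinuousLinearMap.mul ℂ ℂ) ψ θ with hκ
  have hκ_apply : ∀ y, κ y = ∫ z, ψ (y - z) * θ z := fun y => by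
    rw [hκ, SchwartzMap.convolution_apply]
    exact MeasureTheory.convolution_eq_swap _
  have hF : ∀ ξ, ‖ξ‖ < R' → 𝓕⁻ (θ - κ) ξ = 0 := fun ξ hξ => by
    have h1 : 𝓕⁻ κ ξ = χ ξ * 𝓕⁻ θ ξ := by
      rw [fourierInv_apply_eq, fourierInv_apply_eq, hκ]
      simp only [compCLMOfContinuousLinearEquiv_apply, Function.comp_apply]
      rw [SchwartzMap.fourier_convolution, pairing_apply_apply, ContinuousLinearMap.mul_apply']
      congr 1
      have := fourierInv_apply_eq ψ
      rw [hψ, FourierTransform.fourierInv_fourier_eq] at this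
      rw [this]
      simp [hψ]
    have h2 : 𝓕⁻ (θ - κ) = 𝓕⁻ θ - 𝓕⁻ κ := map_sub (FourierTransform.fourierInvCLM ℂ 𝓢(V, ℂ)) θ κ
    rw [h2, sub_apply, h1, hχ ξ hξ, one_mul, sub_self]
  have h0 := hsupp (𝓕⁻ (θ - κ)) (fun ξ hξ => by
    by_contra! hle
    refine notMem_tsupport_iff_eventuallyEq.2 ?_ hξ
    filter_upwards [(isOpen_lt continuous_norm continuous_const).mem_nhds (hle.trans_lt hR)] with ζ hζ
    exact hF ζ hζ)
  rw [fourierTransformCLM_apply, FourierTransform.fourier_fourierInv_eq] at h0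
  have hgi : ∀ f : 𝓢(V, ℂ), Integrable fun x => g x * f x := fun f => by
    have := f.continuous
    refine ((f.integrable_one_add_norm_pow_mul k).const_mul C).mono'
      (Continuous.aestronglyMeasurable (by fun_prop)) (.of_forall fun x => ?_)
    rw [norm_mul, ← mul_assoc]
    gcongr
    exact hgC x
  simp only [sub_apply, mul_sub] at h0
  rw [integral_sub (hgi θ) (hgi κ), sub_eq_zero] at h0
  simp_rw [hκ_apply] at h0
  rw [integral_mul_integral_sub_mul_swap hg hgC] at h0
  simp only [Complex.real_smul, ← hθ]
  rw [← h0]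
  congr! 2
  ring

theorem fourier_comp_inv_smul (f : V → ℂ) {t : ℝ} (ht : 0 < t) (x : V) :
    𝓕 (fun ξ => f (t⁻¹ • ξ)) x = t ^ Module.finrank ℝ V • 𝓕 f (t • x) := by
  rw [Real.fourier_eq, Real.fourier_eq]
  have := Measure.integral_comp_inv_smul (volume : Measure V)
    (fun ξ => Real.fourierChar (-inner ℝ ξ (t • x)) • f ξ) t
  rw [abs_of_nonneg (by positivity)] at this
  rw [← this]
  congr! 5
  rw [inner_smul_left, inner_smul_right]
  simp [ht.ne']

variable (V) in
theorem exists_kernel_bound (N : ℕ) : ∃ K : ℝ, 0 < K ∧ ∀ (v : ℕ) (g : V → ℂ), Continuous g →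
    (∃ (C : ℝ) (k : ℕ), ∀ x, ‖g x‖ ≤ C * (1 + ‖x‖) ^ k) →
    (∀ φ : 𝓢(V, ℂ), (∀ ξ ∈ tsupport ⇑φ, (2 : ℝ) ^ (v + 1) < ‖ξ‖) →
      ∫ x, g x * fourierTransformCLM ℂ φ x = 0) →
    ∀ x, ‖g x‖ₑ ≤ ENNReal.ofReal K * ∫⁻ y, ENNReal.ofReal ((2 : ℝ) ^ (Module.finrank ℝ V * v) *
      ((1 + 2 ^ v * ‖x - y‖) ^ N)⁻¹) * ‖g y‖ₑ := by
  obtain ⟨χ, hχ⟩ := exists_schwartz_eq_one_on_ball V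
  obtain ⟨K, hK0, hK⟩ := (𝓕 χ).exists_one_add_norm_pow_mul_le N
  refine ⟨K, hK0, fun v g hg ⟨C, k, hgC⟩ hsupp x => ?_⟩
  set t : ℝ := 2 ^ v with ht_def
  have ht : 0 < t := by positivity
  let A : V ≃L[ℝ] V := ContinuousLinearEquiv.smulLeft (Units.mk0 t⁻¹ (inv_ne_zero ht.ne'))
  let χt : 𝓢(V, ℂ) := compCLMOfContinuousLinearEquiv ℂ A χ
  have hχt : ∀ ξ, χt ξ = χ (t⁻¹ • ξ) := fun ξ => rfl
  have hχt1 : ∀ ξ, ‖ξ‖ < 3 * t → χt ξ = 1 := fun ξ hξ => by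
    rw [hχt]
    refine hχ _ ?_
    rw [norm_smul, norm_inv, Real.norm_of_nonneg ht.le, inv_mul_lt_iff₀ ht]
    linarith
  have hR : (2 : ℝ) ^ (v + 1) < 3 * t := by rw [pow_succ]; linarith
  have hF : ∀ z, 𝓕 χt z = (t ^ Module.finrank ℝ V : ℝ) • 𝓕 χ (t • z) := fun z => by
    rw [fourier_coe, fourier_coe, ← fourier_comp_inv_smul _ ht]
    rfl
  rw [eq_integral_mul_fourier_sub hR hg hgC hsupp χt hχt1 x]
  refine (enorm_integral_le_lintegral_enorm _).trans ?_
  rw [← lintegral_const_mul' _ _ ofReal_ne_top]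
  refine lintegral_mono fun y => ?_
  rw [enorm_mul, mul_comm, ← mul_assoc, ← ofReal_mul hK0.le]
  gcongr
  rw [← ofReal_norm]
  refine ofReal_le_ofReal ?_
  have h1 := hK (t • (y - x))
  rw [norm_smul, Real.norm_of_nonneg ht.le, norm_sub_rev] at h1
  rw [hF, norm_smul, Real.norm_of_nonneg (by positivity), mul_left_comm, pow_mul', ← ht_def]
  gcongr
  rw [← div_eq_mul_inv, le_div_iff₀ (by positivity), mul_comm]
  exact h1

end Reproducing

section Bootstrap

variable {α : Type*} [MeasurableSpace α] {μ : Measure α} {W : α → α → ℝ≥0∞} {G : α → ℝ≥0∞}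
  {K : ℝ → ℝ≥0∞} {r : ℝ}

theorem peetre_rpow_le_of_ne_top (hW : ∀ x y, W x y ≠ ∞) (hW1 : ∀ x y, 1 ≤ W x y)
    (hWm : ∀ x y z, W x z ≤ W x y * W y z) {a : ℝ} (ha : 0 ≤ a) {k : ℝ≥0∞}
    (hG : ∀ y, G y ≤ k * ∫⁻ z, W y z ^ (-a) * G z ∂μ) (hr : 0 < r) (hr1 : r ≤ 1) (x : α)
    (hM : ⨆ y, G y * W x y ^ (-a) ≠ ∞) :
    (⨆ y, G y * W x y ^ (-a)) ^ r ≤ k * ∫⁻ z, W x z ^ (-(a * r)) * G z ^ r ∂μ := by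
  set M := ⨆ y, G y * W x y ^ (-a) with hMdef
  have hW0 : ∀ x y, W x y ≠ 0 := fun x y => (zero_lt_one.trans_le (hW1 x y)).ne'
  rcases eq_or_ne M 0 with h0 | h0
  · rw [h0, zero_rpow_of_pos hr]; exact zero_le
  have hGM : ∀ z, G z ≤ M * W x z ^ a := fun z => by
    have h : G z * W x z ^ (-a) ≤ M := le_iSup (fun y => G y * W x y ^ (-a)) z
    calc G z = G z * W x z ^ (-a) * W x z ^ a := by
          rw [mul_assoc, ← rpow_add _ _ (hW0 x z) (hW x z)]; simp
      _ ≤ _ := by gcongr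
  have hMtop : M ^ (1 - r) ≠ ∞ := rpow_ne_top_of_nonneg (by linarith) hM
  have key : M ≤ M ^ (1 - r) * (k * ∫⁻ z, W x z ^ (-(a * r)) * G z ^ r ∂μ) := by
    refine iSup_le fun y => ?_
    calc G y * W x y ^ (-a) ≤ (k * ∫⁻ z, W y z ^ (-a) * G z ∂μ) * W x y ^ (-a) := by
          gcongr; exact hG y
      _ = k * ∫⁻ z, W x y ^ (-a) * (W y z ^ (-a) * G z) ∂μ := by
          rw [lintegral_const_mul' _ _ (by simp [rpow_eq_top_iff, hW0, hW])]; ring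
      _ ≤ k * ∫⁻ z, M ^ (1 - r) * (W x z ^ (-(a * r)) * G z ^ r) ∂μ := by
          refine mul_le_mul_right (lintegral_mono fun z => ?_) k
          calc W x y ^ (-a) * (W y z ^ (-a) * G z)
              = (W x y * W y z) ^ (-a) * (G z ^ (1 - r) * G z ^ r) := by
                rw [mul_rpow_of_ne_top (hW _ _) (hW _ _), mul_assoc,
                  ← rpow_add_of_nonneg _ _ (by linarith) hr.le]
                simp
            _ ≤ W x z ^ (-a) * ((M * W x z ^ a) ^ (1 - r) * G z ^ r) := by
                gcongr ?_ * (?_ * _)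
                · rw [rpow_neg, rpow_neg]
                  gcongr
                  exact hWm x y z
                · exact rpow_le_rpow (hGM z) (by linarith)
            _ = M ^ (1 - r) * (W x z ^ (-a + a * (1 - r)) * G z ^ r) := by
                rw [mul_rpow_of_nonneg _ _ (by linarith : (0 : ℝ) ≤ 1 - r), ← rpow_mul,
                  rpow_add _ _ (hW0 x z) (hW x z)]
                ring
            _ = M ^ (1 - r) * (W x z ^ (-(a * r)) * G z ^ r) := by
                rw [show -a + a * (1 - r) = -(a * r) by ring]
      _ = M ^ (1 - r) * (k * ∫⁻ z, W x z ^ (-(a * r)) * G z ^ r ∂μ) := by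
          rw [lintegral_const_mul' _ _ hMtop]; ring
  have hM0 : M ^ (1 - r) ≠ 0 := by simp [rpow_eq_zero_iff, h0, hM]
  refine (ENNReal.mul_le_mul_iff_right hM0 hMtop).1 ?_
  rwa [← rpow_add _ _ h0 hM, sub_add_cancel, rpow_one]

theorem le_rpow_lintegral_of_le_one (hW : ∀ x y, W x y ≠ ∞) (hW1 : ∀ x y, 1 ≤ W x y)
    (hWd : ∀ x, W x x = 1)
    (hWm : ∀ x y z, W x z ≤ W x y * W y z) (hK : ∀ a, K a ≠ ∞)
    (hG : ∀ a, 0 ≤ a → ∀ y, G y ≤ K a * ∫⁻ z, W y z ^ (-a) * G z ∂μ)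
    (hgrowth : ∃ b : ℝ, ∀ x, ∃ D : ℝ≥0∞, D ≠ ∞ ∧ ∀ y, G y ≤ D * W x y ^ b)
    (hr : 0 < r) (hr1 : r ≤ 1) {m : ℝ} (hm : 0 ≤ m) (x : α) :
    G x ^ r ≤ K (m / r) * ∫⁻ z, W x z ^ (-m) * G z ^ r ∂μ ∨
      ∫⁻ z, W x z ^ (-m) * G z ^ r ∂μ = ∞ := by
  rw [or_iff_not_imp_right]
  intro hI
  have hW0 : ∀ x y, W x y ≠ 0 := fun x y => (zero_lt_one.trans_le (hW1 x y)).ne'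
  have hself : ∀ (x : α) (a : ℝ), G x ≤ ⨆ y, G y * W x y ^ (-a) := fun x a => by
    simpa [hWd] using le_iSup (fun y => G y * W x y ^ (-a)) x
  obtain ⟨b, hb⟩ := hgrowth
  set A := max b (m / r) with hA
  have hmr : 0 ≤ m / r := by positivity
  have hA0 : 0 ≤ A := hmr.trans (le_max_right _ _)
  have hmA : m ≤ A * r := by
    rw [← div_le_iff₀ hr]; exact le_max_right _ _
  have hlarge : ∀ y, G y ^ r ≤ K A * ∫⁻ z, W y z ^ (-m) * G z ^ r ∂μ := fun y => by
    obtain ⟨D, hD, hGD⟩ := hb y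
    have hfin : ⨆ z, G z * W y z ^ (-A) ≠ ∞ := by
      refine ne_top_of_le_ne_top hD (iSup_le fun z => ?_)
      calc G z * W y z ^ (-A) ≤ D * W y z ^ b * W y z ^ (-A) := by gcongr; exact hGD z
        _ ≤ D * W y z ^ A * W y z ^ (-A) := by
          gcongr
          exacts [hW1 y z, le_max_left _ _]
        _ = D := by
          rw [mul_assoc, ← rpow_add _ _ (hW0 y z) (hW y z)]
          simp
    calc G y ^ r ≤ _ := rpow_le_rpow (hself y A) hr.le
      _ ≤ _ := peetre_rpow_le_of_ne_top hW hW1 hWm hA0 (hG A hA0) hr hr1 y hfin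
      _ ≤ _ := by
        gcongr with z
        exact hW1 y z
  have hfin : ⨆ y, G y * W x y ^ (-(m / r)) ≠ ∞ := by
    have hle : (⨆ y, G y * W x y ^ (-(m / r))) ≤
        (K A * ∫⁻ z, W x z ^ (-m) * G z ^ r ∂μ) ^ (1 / r) := by
      refine iSup_le fun y => ?_
      rw [← rpow_inv_le_iff (by positivity), one_div, inv_inv,
        mul_rpow_of_nonneg _ _ hr.le, ← rpow_mul, neg_mul, div_mul_cancel₀ _ hr.ne']
      calc G y ^ r * W x y ^ (-m) ≤ (K A * ∫⁻ z, W y z ^ (-m) * G z ^ r ∂μ) * W x y ^ (-m) := by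
            gcongr; exact hlarge y
        _ = K A * ∫⁻ z, W x y ^ (-m) * (W y z ^ (-m) * G z ^ r) ∂μ := by
            rw [lintegral_const_mul' _ _ (by simp [rpow_eq_top_iff, hW0, hW])]; ring
        _ ≤ K A * ∫⁻ z, W x z ^ (-m) * G z ^ r ∂μ := by
            refine mul_le_mul_right (lintegral_mono fun z => ?_) _
            rw [← mul_assoc, ← mul_rpow_of_ne_top (hW _ _) (hW _ _), rpow_neg, rpow_neg]
            gcongr
            exact hWm x y z
    exact ne_top_of_le_ne_top (rpow_ne_top_of_nonneg (by positivity) (mul_ne_top (hK A) hI)) hle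
  have h := peetre_rpow_le_of_ne_top hW hW1 hWm hmr (hG _ hmr) hr hr1 x hfin
  rw [div_mul_cancel₀ _ hr.ne'] at h
  exact (rpow_le_rpow (hself x _) hr.le).trans h

theorem lintegral_mul_le_rpow_of_one_le {w : α → ℝ≥0∞} (hw : Measurable w) (hGm : Measurable G)
    (hr1 : 1 ≤ r) :
    ∫⁻ z, w z * G z ∂μ ≤ (∫⁻ z, w z ∂μ) ^ (1 - 1 / r) * (∫⁻ z, w z * G z ^ r ∂μ) ^ (1 / r) := by
  have hr : 0 < r := by linarith
  have h := eLpNorm_le_eLpNorm_mul_rpow_measure_univ (μ := μ.withDensity w) (p := 1)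
    (q := ENNReal.ofReal r) (f := G) (by simpa using hr1) hGm.aestronglyMeasurable
  rw [eLpNorm_one_eq_lintegral_enorm, eLpNorm_eq_lintegral_rpow_enorm_toReal (by simpa using hr)
    ofReal_ne_top, toReal_ofReal hr.le, withDensity_apply _ .univ, Measure.restrict_univ,
    lintegral_withDensity_eq_lintegral_mul _ hw (by fun_prop),
    lintegral_withDensity_eq_lintegral_mul _ hw (by fun_prop)] at h
  simpa [mul_comm] using h

end Bootstrap

section Weights

variable {V : Type*} [NormedAddCommGroup V]

/-- The weight `1 + t |x - y|`. -/
noncomputable def peetreWeight (t : ℝ) (x y : V) : ℝ≥0∞ := ENNReal.ofReal (1 + t * ‖x - y‖)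

variable {t : ℝ}

theorem peetreWeight_ne_top (x y : V) : peetreWeight t x y ≠ ∞ := ofReal_ne_top

theorem peetreWeight_self (x : V) : peetreWeight t x x = 1 := by simp [peetreWeight]

theorem one_le_peetreWeight (ht : 0 ≤ t) (x y : V) : 1 ≤ peetreWeight t x y := by
  rw [peetreWeight, one_le_ofReal]
  have : 0 ≤ t * ‖x - y‖ := by positivity
  linarith

theorem peetreWeight_le_mul (ht : 0 ≤ t) (x y z : V) :
    peetreWeight t x z ≤ peetreWeight t x y * peetreWeight t y z := by
  rw [peetreWeight, peetreWeight, peetreWeight, ← ofReal_mul (by positivity)]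
  refine ofReal_le_ofReal ?_
  have h1 : t * ‖x - z‖ ≤ t * ‖x - y‖ + t * ‖y - z‖ := by
    rw [← mul_add]
    exact mul_le_mul_of_nonneg_left (norm_sub_le_norm_sub_add_norm_sub x y z) ht
  have h2 : 0 ≤ (t * ‖x - y‖) * (t * ‖y - z‖) := by positivity
  linarith

theorem peetreWeight_rpow (ht : 0 ≤ t) (x y : V) (a : ℝ) :
    peetreWeight t x y ^ a = ENNReal.ofReal ((1 + t * ‖x - y‖) ^ a) :=
  ofReal_rpow_of_pos (by positivity)

variable [InnerProductSpace ℝ V] [FiniteDimensional ℝ V] [MeasurableSpace V] [BorelSpace V]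

theorem lintegral_peetreWeight_rpow_neg (ht : 0 < t) (x : V) (a : ℝ) :
    ENNReal.ofReal (t ^ Module.finrank ℝ V) * ∫⁻ y, peetreWeight t x y ^ (-a) =
      ∫⁻ y : V, ENNReal.ofReal ((1 + ‖y‖) ^ (-a)) := by
  simp_rw [peetreWeight_rpow ht.le]
  rw [lintegral_sub_left_eq_self (fun z : V => ENNReal.ofReal ((1 + t * ‖z‖) ^ (-a)))]
  have hm : Measurable fun y : V => ENNReal.ofReal ((1 + ‖y‖) ^ (-a)) := by fun_prop
  have h := lintegral_map (μ := (volume : Measure V)) hm (measurable_const_smul t)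
  rw [Measure.map_addHaar_smul _ ht.ne', lintegral_smul_measure, abs_of_nonneg (by positivity),
    smul_eq_mul] at h
  simp_rw [norm_smul, Real.norm_of_nonneg ht.le] at h
  rw [← h, ← mul_assoc, ← ofReal_mul (by positivity), mul_inv_cancel₀ (by positivity)]
  simp

end Weights

/-- The r-trick: for `r > 0`, `v ∈ ℕ₀`, `m > n`, there is `c = c(r,m,n) > 0` such that every
(polynomially growing, continuous) `g` with `supp 𝓕g ⊆ {|ξ| ≤ 2^{v+1}}` satisfies
`|g(x)| ≤ c (η_{v,m} * |g|^r (x))^{1/r}`, where `η_{v,m}(x) = 2^{nv}(1 + 2^v|x|)^{-m}`. -/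
theorem r_trick (n : ℕ) (r m : ℝ) (hr : 0 < r) (hm : (n : ℝ) < m) :
    ∃ c : ℝ≥0∞, 0 < c ∧ c < ⊤ ∧
      ∀ (v : ℕ) (g : EuclideanSpace ℝ (Fin n) → ℂ),
        Continuous g →
        (∃ (C : ℝ) (k : ℕ), ∀ x, ‖g x‖ ≤ C * (1 + ‖x‖) ^ k) →
        (∀ φ : 𝓢(EuclideanSpace ℝ (Fin n), ℂ),
          (∀ ξ ∈ tsupport ⇑φ, (2 : ℝ) ^ (v + 1) < ‖ξ‖) →
          ∫ x, g x * fourierTransformCLM ℂ φ x = 0) →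
        ∀ x : EuclideanSpace ℝ (Fin n),
          (‖g x‖₊ : ℝ≥0∞) ≤
            c * (∫⁻ y, ENNReal.ofReal ((2 : ℝ) ^ (n * v) * (1 + 2 ^ v * ‖x - y‖) ^ (-m))
                * (‖g y‖₊ : ℝ≥0∞) ^ r) ^ (1 / r) := by
  have hm0 : 0 ≤ m := n.cast_nonneg.trans hm.le
  choose K hK0 hK using exists_kernel_bound (EuclideanSpace ℝ (Fin n))
  set J : ℝ≥0∞ := ∫⁻ y : EuclideanSpace ℝ (Fin n), ENNReal.ofReal ((1 + ‖y‖) ^ (-m)) with hJ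
  have hJtop : J ≠ ∞ := (finite_integral_one_add_norm (by simpa using hm)).ne
  let L : ℝ → ℝ≥0∞ := fun a => ENNReal.ofReal (K ⌈a⌉₊)
  have hL : ∀ a, L a ≠ ∞ := fun a => ofReal_ne_top
  set c : ℝ≥0∞ := if r ≤ 1 then L (m / r) ^ (1 / r) else L m * J ^ (1 - 1 / r) with hc
  have hctop : c ≠ ∞ := by
    rw [hc]
    split_ifs with h
    · exact rpow_ne_top_of_nonneg (by positivity) (hL _)
    · refine mul_ne_top (hL _) (rpow_ne_top_of_nonneg ?_ hJtop)
      rw [sub_nonneg, div_le_one hr]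
      exact (not_le.1 h).le
  refine ⟨c + 1, by positivity, by finiteness, fun v g hg hgrowth hsupp x => ?_⟩
  set t : ℝ := 2 ^ v with ht_def
  have ht0 : 0 < t := by positivity
  have ht1 : 1 ≤ t := one_le_pow₀ one_le_two
  let μ : Measure (EuclideanSpace ℝ (Fin n)) := ENNReal.ofReal (t ^ n) • volume
  have hμ : ∀ (a : ℝ) (y : EuclideanSpace ℝ (Fin n)) (f : EuclideanSpace ℝ (Fin n) → ℝ≥0∞),
      ∫⁻ z, peetreWeight t y z ^ (-a) * f z ∂μ =
        ∫⁻ z, ENNReal.ofReal ((2 : ℝ) ^ (n * v) * (1 + t * ‖y - z‖) ^ (-a)) * f z :=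
      fun a y f => by
    rw [lintegral_smul_measure, smul_eq_mul, ← lintegral_const_mul' _ _ ofReal_ne_top]
    refine lintegral_congr fun z => ?_
    rw [peetreWeight_rpow ht0.le, ← mul_assoc, ← ofReal_mul (by positivity), ht_def, ← pow_mul,
      mul_comm v n]
  have hbound : ∀ a, 0 ≤ a → ∀ y,
      ‖g y‖ₑ ≤ L a * ∫⁻ z, peetreWeight t y z ^ (-a) * ‖g z‖ₑ ∂μ := fun a ha y => by
    rw [hμ]
    refine (hK ⌈a⌉₊ v g hg hgrowth hsupp y).trans ?_
    rw [finrank_euclideanSpace_fin, ← ht_def]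
    gcongr with z
    rw [← Real.rpow_natCast, ← Real.rpow_neg (by positivity)]
    gcongr
    · have : 0 ≤ t * ‖y - z‖ := by positivity
      linarith
    · exact Nat.le_ceil a
  suffices h : ‖g x‖ₑ ≤ (c + 1) * (∫⁻ z, peetreWeight t x z ^ (-m) * ‖g z‖ₑ ^ r ∂μ) ^ (1 / r) by
    rwa [hμ] at h
  rcases le_or_gt r 1 with hr1 | hr1
  · have hgrowth' : ∃ b : ℝ, ∀ y, ∃ D : ℝ≥0∞, D ≠ ∞ ∧
        ∀ z, ‖g z‖ₑ ≤ D * peetreWeight t y z ^ b := by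
      obtain ⟨C, k, hgC⟩ := hgrowth
      have hC : 0 ≤ C := by simpa using (norm_nonneg _).trans (hgC 0)
      refine ⟨k, fun y => ⟨ENNReal.ofReal (C * (1 + ‖y‖) ^ k), ofReal_ne_top, fun z => ?_⟩⟩
      rw [peetreWeight_rpow ht0.le, ← ofReal_mul (by positivity), ← ofReal_norm,
        Real.rpow_natCast]
      refine ofReal_le_ofReal ((norm_le_of_growth hgC z y).trans ?_)
      rw [mul_right_comm, norm_sub_rev]
      gcongr
      exact le_mul_of_one_le_left (norm_nonneg _) ht1
    rcases le_rpow_lintegral_of_le_one peetreWeight_ne_top (one_le_peetreWeight ht0.le)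
      peetreWeight_self (peetreWeight_le_mul ht0.le) hL hbound hgrowth' hr hr1 hm0 x with h | h
    · calc ‖g x‖ₑ = (‖g x‖ₑ ^ r) ^ (1 / r) := by
            rw [← rpow_mul, mul_one_div_cancel hr.ne', rpow_one]
        _ ≤ _ := rpow_le_rpow h (by positivity)
        _ = c * (∫⁻ z, peetreWeight t x z ^ (-m) * ‖g z‖ₑ ^ r ∂μ) ^ (1 / r) := by
            rw [mul_rpow_of_nonneg _ _ (by positivity), hc, if_pos hr1]
        _ ≤ _ := by gcongr; exact le_self_add
    · rw [h, top_rpow_of_pos (by positivity), mul_top (by positivity)]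
      exact le_top
  · have hWm : Measurable fun z => peetreWeight t x z ^ (-m) := by
      unfold peetreWeight
      fun_prop
    have hWJ : ∫⁻ z, peetreWeight t x z ^ (-m) ∂μ = J := by
      rw [hJ, ← lintegral_peetreWeight_rpow_neg ht0 x, finrank_euclideanSpace_fin,
        lintegral_smul_measure, smul_eq_mul]
    calc ‖g x‖ₑ ≤ L m * ∫⁻ z, peetreWeight t x z ^ (-m) * ‖g z‖ₑ ∂μ := hbound m hm0 x
      _ ≤ L m * (J ^ (1 - 1 / r) *
          (∫⁻ z, peetreWeight t x z ^ (-m) * ‖g z‖ₑ ^ r ∂μ) ^ (1 / r)) := by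
        rw [← hWJ]
        gcongr
        exact lintegral_mul_le_rpow_of_one_le hWm hg.measurable.enorm hr1.le
      _ = c * (∫⁻ z, peetreWeight t x z ^ (-m) * ‖g z‖ₑ ^ r ∂μ) ^ (1 / r) := by
        rw [hc, if_neg hr1.not_ge, mul_assoc]
      _ ≤ _ := by gcongr; exact le_self_add
end
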